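/- arXiv:1504.05275 — 2 statements merged into one kernel-verified Lean document; each statement's English description precedes it below -/
import Mathlib

section
/- (Ergodic decomposition of conditional entropy for a partition) Let (X,B,μ,T) be an invertible Lebesgue system, μ = ∫_E μ_e dη(e) its ergodic decomposition, and C a countably generated sub-σ-algebra of B with T⁻¹C ⊆ C. Then for every finite measurable partition α of X, h_μ(T,α|C) = ∫_E h_{μ_e}(T,α|C) dη(e). -/
/-!
The proof works on the joint space `E × X` with the law `P = η ⊗ κ`, where `κ e = μe e`, and with the
transformation `S = id × T`. Since almost every `μe e` is `T`-invariant,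
`S` preserves `P`; the second projection sends `P` to `μ`. Hence `h_μ(T, α | C)` is the entropy of
`S` on `P` conditioned on the σ-algebra `C` pulled back to `E × X`, while the average of the fibre
entropies `H_{μe e}(α_n | C)` is the entropy of `α_n` under `P` conditioned on `E ⊗ C`
(`condH_compProd`; this rests on a jointly measurable choice of the fibre conditional probabilities,
available because `C` is countably generated). So the claim says that additionally conditioning on
the `S`-invariant σ-algebra of `E` does not change dynamical entropy.

One inequality is the monotonicity of entropy in the conditioning (`condH_anti`, conditional Jensen).
For the other, assume that `E` is countably generated, with increasing finite partitions `ξ_k`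
generating it. Conditioning additionally on `ξ_k` changes the entropy of any partition by at most the
number of cells of `ξ_k` (`condH_le_add_card`), a constant which disappears after division by `n`.
Therefore `h_μ(T, α | C)` is at most `(1/n) H_P(α_n | ξ_k ∨ C)` for all `n` and `k`. Letting `k → ∞`
by Lévy's upward theorem (`tendsto_condH_filtration`), then `n → ∞`, gives the bound by the integral
of the fibre entropies. Fekete's lemma (`tendsto_hPartCond`) turns the infima over `n` into limits.

For general `E` one replaces its σ-algebra by the one generated by `e ↦ μe e s`, where `s` runs
through a countable algebra of sets generating the σ-algebra of `X` (`exists_small_sigma`).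
-/

open MeasureTheory Filter Set Topology

section EntropyCore

variable {X : Type*}

/-- Conditional entropy `H_μ(α | C)` of a finite family of sets given a sub-σ-algebra `C`. -/
noncomputable def condH {m0 : MeasurableSpace X} (μ : Measure X) {ι : Type*} [Fintype ι]
    (α : ι → Set X) (C : MeasurableSpace X) : ℝ :=
  ∑ i, ∫ x, Real.negMulLog ((μ[(α i).indicator (fun _ => (1:ℝ)) | C]) x) ∂μ

/-- Plain entropy `H_μ(α)` of a finite family of sets. -/
noncomputable def plainH {m0 : MeasurableSpace X} (μ : Measure X) {ι : Type*} [Fintype ι]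
    (α : ι → Set X) : ℝ :=
  ∑ i, Real.negMulLog (μ (α i)).toReal

/-- Atoms of the dynamical join `⋁_{i=0}^{n-1} T^{-i} α`. -/
def joinAtoms (T : X → X) {ι : Type*} (α : ι → Set X) (n : ℕ) : (Fin n → ι) → Set X :=
  fun s => ⋂ i : Fin n, (T^[(i : ℕ)]) ⁻¹' α (s i)

/-- Conditional dynamical entropy `h_μ(T, α | C)` of a finite family `α`
(as the infimum, which coincides with the defining limit, of `(1/n) H_μ(⋁_{i<n} T^{-i}α | C)`). -/
noncomputable def hPartCond {m0 : MeasurableSpace X} (μ : Measure X) (T : X → X)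
    {ι : Type*} [Fintype ι] (α : ι → Set X) (C : MeasurableSpace X) : ℝ :=
  ⨅ n : ℕ, (1 / (n + 1 : ℝ)) * condH μ (joinAtoms T α (n + 1)) C

/-- Dynamical entropy `h_μ(T, α)` of a finite family `α`. -/
noncomputable def hPart {m0 : MeasurableSpace X} (μ : Measure X) (T : X → X)
    {ι : Type*} [Fintype ι] (α : ι → Set X) : ℝ :=
  ⨅ n : ℕ, (1 / (n + 1 : ℝ)) * plainH μ (joinAtoms T α (n + 1))

/-- A finite measurable partition of `X` (with respect to the σ-algebra `m`). -/
structure FinPart (X : Type*) (m : MeasurableSpace X) where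
  k : ℕ
  atom : Fin k → Set X
  meas : ∀ i, MeasurableSet[m] (atom i)
  disj : ∀ i j, i ≠ j → Disjoint (atom i) (atom j)
  cover : ⋃ i, atom i = Set.univ

/-- Conditional (measure-theoretic) entropy `h_μ(T | C)`. -/
noncomputable def hCond {m0 : MeasurableSpace X} (μ : Measure X) (T : X → X)
    (C : MeasurableSpace X) : ℝ :=
  ⨆ α : FinPart X m0, hPartCond μ T α.atom C

end EntropyCore

open ProbabilityTheory

/-! ### Conditional probabilities and conditional entropy of partitions -/

section Basic

variable {Ω : Type*} {D D' : MeasurableSpace Ω} {m0 : MeasurableSpace Ω}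

/-- The conditional probability `P(B | D)`. -/
noncomputable def condP (P : Measure Ω) (D : MeasurableSpace Ω) (B : Set Ω) : Ω → ℝ :=
  P[B.indicator (fun _ => (1 : ℝ)) | D]

/-- The family `β` partitions `Ω` (some members may be empty). -/
def IsPart {ι : Type*} (β : ι → Set Ω) : Prop := ∀ x, ∃! i, x ∈ β i

lemma IsPart.sum_indicator {ι : Type*} [Fintype ι] {β : ι → Set Ω} (h : IsPart β) (A : Set Ω)
    (x : Ω) : ∑ i, (A ∩ β i).indicator (fun _ => (1 : ℝ)) x = A.indicator (fun _ => (1 : ℝ)) x := by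
  classical
  obtain ⟨i, hi, hu⟩ := h x
  rw [Finset.sum_eq_single i]
  · by_cases hA : x ∈ A <;> simp [indicator, hA, hi]
  · intro j _ hj
    have : x ∉ β j := fun hx => hj (hu j hx)
    simp [indicator, this]
  · simp

lemma integrable_ind (P : Measure Ω) [IsFiniteMeasure P] {B : Set Ω} (hB : MeasurableSet B) :
    Integrable (B.indicator (fun _ => (1 : ℝ))) P :=
  (integrable_const 1).indicator hB

lemma condP_mem (P : Measure Ω) [IsProbabilityMeasure P] (hD : D ≤ m0)
    {B : Set Ω} (hB : MeasurableSet B) : ∀ᵐ x ∂P, condP P D B x ∈ Icc (0 : ℝ) 1 := by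
  have h0 : 0 ≤ᵐ[P] P[B.indicator (fun _ => (1 : ℝ)) | D] :=
    condExp_nonneg (ae_of_all _ fun x => indicator_nonneg (by simp) x)
  have h1 : P[B.indicator (fun _ => (1 : ℝ)) | D] ≤ᵐ[P] P[fun _ => (1 : ℝ) | D] :=
    condExp_mono (integrable_ind P hB) (integrable_const 1)
      (ae_of_all _ fun x => indicator_le_self' (by simp) x)
  rw [condExp_const hD] at h1
  filter_upwards [h0, h1] with x hx0 hx1 using ⟨hx0, hx1⟩

lemma condP_univ (P : Measure Ω) [IsProbabilityMeasure P] (hD : D ≤ m0) :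
    condP P D univ = fun _ => 1 := by
  simp [condP, indicator_univ, condExp_const hD]

lemma condP_sum (P : Measure Ω) [IsProbabilityMeasure P]
    {ι : Type*} [Fintype ι] {β : ι → Set Ω} (h : IsPart β) (hβ : ∀ i, MeasurableSet (β i))
    {A : Set Ω} (hA : MeasurableSet A) :
    ∀ᵐ x ∂P, ∑ i, condP P D (A ∩ β i) x = condP P D A x := by
  have := condExp_finsetSum (μ := P) (s := Finset.univ)
    (f := fun i => (A ∩ β i).indicator (fun _ => (1 : ℝ)))
    (fun i _ => integrable_ind P (hA.inter (hβ i))) D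
  have e : ∑ i, (A ∩ β i).indicator (fun _ => (1 : ℝ)) = A.indicator (fun _ => (1 : ℝ)) := by
    ext x; rw [Finset.sum_apply]; exact h.sum_indicator A x
  rw [e] at this
  filter_upwards [this] with x hx
  rw [condP, hx, Finset.sum_apply]; rfl

lemma condP_sum_one (P : Measure Ω) [IsProbabilityMeasure P] (hD : D ≤ m0)
    {ι : Type*} [Fintype ι] {β : ι → Set Ω} (h : IsPart β) (hβ : ∀ i, MeasurableSet (β i)) :
    ∀ᵐ x ∂P, ∑ i, condP P D (β i) x = 1 := by
  have := condP_sum (D := D) P h hβ MeasurableSet.univ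
  simpa [condP_univ P hD] using this

lemma condP_mono (P : Measure Ω) [IsProbabilityMeasure P]
    {A B : Set Ω} (hA : MeasurableSet A) (hB : MeasurableSet B) (h : A ⊆ B) :
    ∀ᵐ x ∂P, condP P D A x ≤ condP P D B x :=
  condExp_mono (integrable_ind P hA) (integrable_ind P hB)
    (ae_of_all _ fun x => indicator_le_indicator_of_subset h (fun _ => zero_le_one) x)

lemma phi_mem {t : ℝ} (h : t ∈ Icc (0 : ℝ) 1) : Real.negMulLog t ∈ Icc (0 : ℝ) 1 :=
  ⟨Real.negMulLog_nonneg h.1 h.2, (Real.negMulLog_le_one_sub_self h.1).trans (by linarith [h.1])⟩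

lemma integrable_of_mem_Icc (P : Measure Ω) [IsFiniteMeasure P] {f : Ω → ℝ}
    (hf : AEStronglyMeasurable f P) (h : ∀ᵐ x ∂P, f x ∈ Icc (0 : ℝ) 1) : Integrable f P :=
  Integrable.of_bound hf 1 (h.mono fun x hx => by
    rw [Real.norm_eq_abs, abs_of_nonneg hx.1]; exact hx.2)

lemma aesm_condP (P : Measure Ω) [IsProbabilityMeasure P] (hD : D ≤ m0)
    (B : Set Ω) : AEStronglyMeasurable (condP P D B) P :=
  (stronglyMeasurable_condExp.mono hD).aestronglyMeasurable

lemma integrable_phi (P : Measure Ω) [IsProbabilityMeasure P] {f : Ω → ℝ}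
    (hf : AEStronglyMeasurable f P) (h : ∀ᵐ x ∂P, f x ∈ Icc (0 : ℝ) 1) :
    Integrable (fun x => Real.negMulLog (f x)) P :=
  integrable_of_mem_Icc P (Real.continuous_negMulLog.comp_aestronglyMeasurable hf)
    (h.mono fun _ hx => phi_mem hx)

lemma integrable_phi_condP (P : Measure Ω) [IsProbabilityMeasure P]
    (hD : D ≤ m0) {B : Set Ω} (hB : MeasurableSet B) :
    Integrable (fun x => Real.negMulLog (condP P D B x)) P :=
  integrable_phi P (aesm_condP P hD B) (condP_mem P hD hB)

lemma condH_eq_integral (P : Measure Ω) [IsProbabilityMeasure P]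
    (hD : D ≤ m0) {ι : Type*} [Fintype ι] {β : ι → Set Ω} (hβ : ∀ i, MeasurableSet (β i)) :
    condH P β D = ∫ x, ∑ i, Real.negMulLog (condP P D (β i) x) ∂P := by
  rw [integral_finsetSum _ fun i _ => integrable_phi_condP P hD (hβ i)]; rfl

lemma condH_nonneg (P : Measure Ω) [IsProbabilityMeasure P]
    (hD : D ≤ m0) {ι : Type*} [Fintype ι] {β : ι → Set Ω} (hβ : ∀ i, MeasurableSet (β i)) :
    0 ≤ condH P β D :=
  Finset.sum_nonneg fun i _ => integral_nonneg_of_ae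
    ((condP_mem P hD (hβ i)).mono fun _ hx => (phi_mem hx).1)

lemma condH_le_card (P : Measure Ω) [IsProbabilityMeasure P]
    (hD : D ≤ m0) {ι : Type*} [Fintype ι] {β : ι → Set Ω} (hβ : ∀ i, MeasurableSet (β i)) :
    condH P β D ≤ Fintype.card ι := by
  calc condH P β D ≤ ∑ _i : ι, (1 : ℝ) := by
        refine Finset.sum_le_sum fun i _ => ?_
        calc _ ≤ ∫ _x, (1 : ℝ) ∂P := integral_mono_ae (integrable_phi_condP P hD (hβ i))
              (integrable_const 1) ((condP_mem P hD (hβ i)).mono fun _ hx => (phi_mem hx).2)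
          _ = 1 := by simp
    _ = Fintype.card ι := by simp

/-- If `r ≤ p, q` then `-r log r ≤ -r log p - r log q + (p q - r)`, the pointwise form of the
nonnegativity of relative entropy. -/
lemma phi_gibbs {r p q : ℝ} (hr : 0 ≤ r) (hp : r ≤ p) (hq : r ≤ q) :
    Real.negMulLog r ≤ -r * Real.log p - r * Real.log q + (p * q - r) := by
  rcases hr.eq_or_lt with h | h
  · subst h
    simpa using mul_nonneg hp hq
  · have hp' := h.trans_le hp
    have hq' := h.trans_le hq
    have := Real.log_le_sub_one_of_pos (x := p * q / r) (by positivity)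
    rw [Real.log_div (by positivity) h.ne', Real.log_mul hp'.ne' hq'.ne'] at this
    have h2 := mul_le_mul_of_nonneg_left this h.le
    have e : r * (p * q / r - 1) = p * q - r := by field_simp
    rw [e] at h2
    unfold Real.negMulLog
    linarith

lemma sum_phi_prod_le {ι κ : Type*} [Fintype ι] [Fintype κ] {r : ι × κ → ℝ} {p : ι → ℝ} {q : κ → ℝ}
    (hr : ∀ z, 0 ≤ r z) (hp : ∀ i, ∑ j, r (i, j) = p i) (hq : ∀ j, ∑ i, r (i, j) = q j)
    (hp1 : ∑ i, p i = 1) (hq1 : ∑ j, q j = 1) :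
    ∑ z, Real.negMulLog (r z) ≤ ∑ i, Real.negMulLog (p i) + ∑ j, Real.negMulLog (q j) := by
  calc ∑ z, Real.negMulLog (r z) ≤ ∑ z : ι × κ, (-r z * Real.log (p z.1) - r z * Real.log (q z.2)
        + (p z.1 * q z.2 - r z)) := by
        refine Finset.sum_le_sum fun z _ => phi_gibbs (hr z) ?_ ?_
        · rw [← hp]
          exact Finset.single_le_sum (f := fun j => r (z.1, j)) (fun j _ => hr _)
            (Finset.mem_univ z.2)
        · rw [← hq]
          exact Finset.single_le_sum (f := fun i => r (i, z.2)) (fun j _ => hr _)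
            (Finset.mem_univ z.1)
    _ = ∑ i, Real.negMulLog (p i) + ∑ j, Real.negMulLog (q j) := by
        have e1 : ∑ z : ι × κ, -r z * Real.log (p z.1) = ∑ i, Real.negMulLog (p i) := by
          rw [Fintype.sum_prod_type]
          refine Finset.sum_congr rfl fun i _ => ?_
          dsimp only
          rw [← Finset.sum_mul, Finset.sum_neg_distrib, hp]; rfl
        have e2 : ∑ z : ι × κ, -r z * Real.log (q z.2) = ∑ j, Real.negMulLog (q j) := by
          rw [Fintype.sum_prod_type_right]
          refine Finset.sum_congr rfl fun i _ => ?_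
          dsimp only
          rw [← Finset.sum_mul, Finset.sum_neg_distrib, hq]; rfl
        have e3 : ∑ z : ι × κ, p z.1 * q z.2 = 1 := by
          rw [Fintype.sum_prod_type]
          simp_rw [← Finset.mul_sum, hq1, mul_one, hp1]
        have e4 : ∑ z : ι × κ, r z = 1 := by
          rw [Fintype.sum_prod_type]; simp_rw [hp, hp1]
        have e2' : ∑ z : ι × κ, r z * Real.log (q z.2) = -∑ j, Real.negMulLog (q j) := by
          rw [← e2, ← Finset.sum_neg_distrib]; simp
        rw [Finset.sum_add_distrib, Finset.sum_sub_distrib, Finset.sum_sub_distrib, e1, e2', e3, e4]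
        ring

/-- Subadditivity of entropy under joins of partitions. -/
lemma condH_join_le (P : Measure Ω) [IsProbabilityMeasure P]
    (hD : D ≤ m0) {ι κ : Type*} [Fintype ι] [Fintype κ] {β : ι → Set Ω} {γ : κ → Set Ω}
    (hβ : ∀ i, MeasurableSet (β i)) (hγ : ∀ i, MeasurableSet (γ i))
    (pβ : IsPart β) (pγ : IsPart γ) :
    condH P (fun z : ι × κ => β z.1 ∩ γ z.2) D ≤ condH P β D + condH P γ D := by
  have hβγ : ∀ z : ι × κ, MeasurableSet (β z.1 ∩ γ z.2) := fun z => (hβ _).inter (hγ _)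
  rw [condH_eq_integral P hD hβ, condH_eq_integral P hD hγ, condH_eq_integral P hD hβγ,
    ← integral_add (integrable_finsetSum _ fun i _ => integrable_phi_condP P hD (hβ i))
      (integrable_finsetSum _ fun i _ => integrable_phi_condP P hD (hγ i))]
  refine integral_mono_ae (integrable_finsetSum _ fun i _ => integrable_phi_condP P hD (hβγ i))
    ((integrable_finsetSum _ fun i _ => integrable_phi_condP P hD (hβ i)).add
      (integrable_finsetSum _ fun i _ => integrable_phi_condP P hD (hγ i))) ?_
  have a1 : ∀ᵐ x ∂P, ∀ z : ι × κ, condP P D (β z.1 ∩ γ z.2) x ∈ Icc (0 : ℝ) 1 :=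
    ae_all_iff.2 fun z => condP_mem P hD (hβγ z)
  have a2 : ∀ᵐ x ∂P, ∀ i, ∑ j, condP P D (β i ∩ γ j) x = condP P D (β i) x :=
    ae_all_iff.2 fun i => condP_sum (D := D) P pγ hγ (hβ i)
  have a3 : ∀ᵐ x ∂P, ∀ j, ∑ i, condP P D (γ j ∩ β i) x = condP P D (γ j) x :=
    ae_all_iff.2 fun j => condP_sum (D := D) P pβ hβ (hγ j)
  filter_upwards [a1, a2, a3, condP_sum_one P hD pβ hβ, condP_sum_one P hD pγ hγ]
    with x h1 h2 h3 h4 h5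
  refine sum_phi_prod_le (r := fun z => condP P D (β z.1 ∩ γ z.2) x) (fun z => (h1 z).1) h2 ?_ h4 h5
  intro j
  rw [← h3 j]
  exact Finset.sum_congr rfl fun i _ => by rw [inter_comm]

/-- Conditional Jensen for the entropy function. -/
lemma concaveOn_negMulLog_condExp {P : Measure Ω} [IsProbabilityMeasure P]
    (hD : D ≤ m0) {f : Ω → ℝ} (hf : AEStronglyMeasurable f P)
    (h : ∀ᵐ x ∂P, f x ∈ Icc (0 : ℝ) 1) :
    P[fun x => Real.negMulLog (f x) | D] ≤ᵐ[P] fun x => Real.negMulLog ((P[f | D]) x) :=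
  Real.concaveOn_negMulLog.condExp_map_le hD
    (Real.continuous_negMulLog.upperSemicontinuous.upperSemicontinuousOn _)
    (h.mono fun _ hx => hx.1) isClosed_Ici (integrable_of_mem_Icc P hf h) (integrable_phi P hf h)

/-- Enlarging the conditioning σ-algebra lowers entropy (conditional Jensen). -/
lemma condH_anti (P : Measure Ω) [IsProbabilityMeasure P]
    (hDD : D ≤ D') (hD' : D' ≤ m0) {ι : Type*} [Fintype ι] {β : ι → Set Ω}
    (hβ : ∀ i, MeasurableSet (β i)) : condH P β D' ≤ condH P β D := by
  have hD := hDD.trans hD'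
  refine Finset.sum_le_sum fun i _ => ?_
  change ∫ x, Real.negMulLog (condP P D' (β i) x) ∂P ≤ ∫ x, Real.negMulLog (condP P D (β i) x) ∂P
  have tower : P[condP P D' (β i) | D] =ᵐ[P] condP P D (β i) := condExp_condExp_of_le hDD hD'
  have J := concaveOn_negMulLog_condExp
    (P := P) hD (aesm_condP P hD' (β i)) (condP_mem P hD' (hβ i))
  calc ∫ x, Real.negMulLog (condP P D' (β i) x) ∂P
      = ∫ x, (P[fun x => Real.negMulLog (condP P D' (β i) x) | D]) x ∂P :=
        (integral_condExp hD).symm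
    _ ≤ _ := by
        refine integral_mono_ae integrable_condExp (integrable_phi_condP P hD (hβ i)) ?_
        filter_upwards [J, tower] with x h1 h2
        rw [← h2]; exact h1

/-- Conditional probabilities are natural under pulling back along a measure-preserving map. -/
lemma condP_comap {Ω' : Type*} {D : MeasurableSpace Ω'} {m1 : MeasurableSpace Ω'}
    {P : Measure Ω} [IsProbabilityMeasure P]
    {P' : Measure Ω'} [IsProbabilityMeasure P'] {g : Ω → Ω'} (hg : MeasurePreserving g P P')
    (hD : D ≤ m1) {B : Set Ω'} (hB : MeasurableSet B) :
    (fun x => condP P' D B (g x)) =ᵐ[P] condP P (D.comap g) (g ⁻¹' B) := by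
  have hc : D.comap g ≤ m0 := (MeasurableSpace.comap_mono hD).trans hg.measurable.comap_le
  have hint : Integrable (fun x => condP P' D B (g x)) P :=
    (hg.integrable_comp (aesm_condP P' hD B)).2 integrable_condExp
  refine ae_eq_condExp_of_forall_setIntegral_eq hc (integrable_ind P (hg.measurable hB))
    (fun s _ _ => hint.integrableOn) ?_ ?_
  · rintro s ⟨t, ht, rfl⟩ -
    have e1 : ∫ x in g ⁻¹' t, condP P' D B (g x) ∂P = ∫ y in t, condP P' D B y ∂P' := by
      rw [← hg.map_eq, setIntegral_map (hD t ht) _ hg.measurable.aemeasurable]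
      rw [hg.map_eq]; exact aesm_condP P' hD B
    rw [e1, condP, setIntegral_condExp hD (integrable_ind P' hB) ht,
      ← hg.map_eq, setIntegral_map (hD t ht) _ hg.measurable.aemeasurable]
    · rfl
    · exact ((measurable_const).indicator hB).aestronglyMeasurable
  · have : @Measurable Ω ℝ (D.comap g) _ (fun x => condP P' D B (g x)) :=
      (stronglyMeasurable_condExp.measurable).comp (comap_measurable g)
    exact this.stronglyMeasurable.aestronglyMeasurable

lemma condH_comap {Ω' : Type*} {D : MeasurableSpace Ω'} {m1 : MeasurableSpace Ω'}
    {P : Measure Ω} [IsProbabilityMeasure P]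
    {P' : Measure Ω'} [IsProbabilityMeasure P'] {g : Ω → Ω'} (hg : MeasurePreserving g P P')
    (hD : D ≤ m1) {ι : Type*} [Fintype ι] {β : ι → Set Ω'}
    (hβ : ∀ i, MeasurableSet (β i)) :
    condH P (fun i => g ⁻¹' β i) (D.comap g) = condH P' β D := by
  refine Finset.sum_congr rfl fun i _ => ?_
  change ∫ x, Real.negMulLog (condP P (D.comap g) (g ⁻¹' β i) x) ∂P
    = ∫ x, Real.negMulLog (condP P' D (β i) x) ∂P'
  have h := condP_comap hg hD (hβ i)
  have e : ∫ x, Real.negMulLog (condP P' D (β i) x) ∂P'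
      = ∫ x, Real.negMulLog (condP P' D (β i) (g x)) ∂P := by
    rw [← hg.map_eq, integral_map hg.measurable.aemeasurable]
    rw [hg.map_eq]
    exact Real.continuous_negMulLog.comp_aestronglyMeasurable (aesm_condP P' hD (β i))
  rw [e]
  exact integral_congr_ae (h.mono fun x hx => by simp only [← hx])

end Basic

/-! ### Dynamical conditional entropy as a limit -/


section Dynamics

variable {Ω : Type*} {D D' : MeasurableSpace Ω} {m0 : MeasurableSpace Ω}

lemma measurableSet_joinAtoms {S : Ω → Ω} (hS : Measurable S) {ι : Type*} {α : ι → Set Ω}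
    (hα : ∀ i, MeasurableSet (α i)) (n : ℕ) (s : Fin n → ι) :
    MeasurableSet (joinAtoms S α n s) :=
  MeasurableSet.iInter fun i => (hS.iterate i) (hα _)

lemma IsPart.joinAtoms {ι : Type*} {α : ι → Set Ω} (h : IsPart α) (S : Ω → Ω) (n : ℕ) :
    IsPart (joinAtoms S α n) := by
  intro x
  choose i hi hu using fun k : Fin n => h (S^[k] x)
  refine ⟨i, mem_iInter.2 hi, fun s hs => funext fun k => hu k _ (mem_iInter.1 hs k)⟩

lemma IsPart.preimage {Ω' ι : Type*} {α : ι → Set Ω'} (h : IsPart α) (g : Ω → Ω') :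
    IsPart (fun i => g ⁻¹' α i) := fun x => h (g x)

lemma joinAtoms_append {ι : Type*} (S : Ω → Ω) (α : ι → Set Ω) (m n : ℕ)
    (z : (Fin m → ι) × (Fin n → ι)) :
    joinAtoms S α (m + n) (Fin.append z.1 z.2)
      = joinAtoms S α m z.1 ∩ S^[m] ⁻¹' joinAtoms S α n z.2 := by
  ext x
  simp only [joinAtoms, mem_iInter, mem_preimage, mem_inter_iff]
  rw [Fin.forall_fin_add]
  simp [Nat.add_comm m, Function.iterate_add_apply]

lemma comap_iterate_le {S : Ω → Ω} (h : D.comap S ≤ D) (n : ℕ) : D.comap S^[n] ≤ D := by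
  induction n with
  | zero => simp
  | succ n ih =>
    rw [Function.iterate_succ, ← MeasurableSpace.comap_comp]
    exact (MeasurableSpace.comap_mono ih).trans h

lemma condH_reindex (P : Measure Ω) {ι κ : Type*} [Fintype ι] [Fintype κ] (e : κ ≃ ι)
    (β : ι → Set Ω) : condH P (fun k => β (e k)) D = condH P β D :=
  Equiv.sum_comp e fun i =>
    ∫ x, Real.negMulLog ((P[(β i).indicator (fun _ => (1:ℝ)) | D]) x) ∂P

lemma condH_joinAtoms_subadditive {P : Measure Ω} [IsProbabilityMeasure P] {S : Ω → Ω}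
    (hS : MeasurePreserving S P P) (hD : D ≤ m0) (hSD : D.comap S ≤ D) {ι : Type*} [Fintype ι]
    {α : ι → Set Ω} (hα : ∀ i, MeasurableSet (α i)) (pα : IsPart α) :
    Subadditive fun n => condH P (joinAtoms S α n) D := by
  intro m n
  have hm := measurableSet_joinAtoms hS.measurable hα
  have hSm := hS.iterate m
  change condH P (joinAtoms S α (m + n)) D ≤ _
  rw [← condH_reindex P (Fin.appendEquiv m n) (joinAtoms S α (m + n))]
  have e : (fun k => joinAtoms S α (m + n) (Fin.appendEquiv m n k))
      = fun z => joinAtoms S α m z.1 ∩ S^[m] ⁻¹' joinAtoms S α n z.2 :=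
    funext fun z => joinAtoms_append S α m n z
  rw [e]
  refine (condH_join_le P hD (hm m) (fun i => hSm.measurable (hm n i)) (pα.joinAtoms S m)
    ((pα.joinAtoms S n).preimage S^[m])).trans ?_
  gcongr
  refine (condH_anti P (comap_iterate_le hSD m) hD (fun i => hSm.measurable (hm n i))).trans ?_
  rw [condH_comap hSm hD (hm n)]

lemma bddBelow_condH (P : Measure Ω) [IsProbabilityMeasure P] {S : Ω → Ω}
    (hS : Measurable S) (hD : D ≤ m0) {ι : Type*} [Fintype ι]
    {α : ι → Set Ω} (hα : ∀ i, MeasurableSet (α i)) :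
    BddBelow (range fun n : ℕ => (1 / (n + 1 : ℝ)) * condH P (joinAtoms S α (n + 1)) D) := by
  refine ⟨0, ?_⟩
  rintro _ ⟨n, rfl⟩
  exact mul_nonneg (by positivity) (condH_nonneg P hD (measurableSet_joinAtoms hS hα _))

/-- By Fekete's lemma the infimum in `hPartCond` is a limit. -/
lemma tendsto_hPartCond {P : Measure Ω} [IsProbabilityMeasure P] {S : Ω → Ω}
    (hS : MeasurePreserving S P P) (hD : D ≤ m0) (hSD : D.comap S ≤ D) {ι : Type*} [Fintype ι]
    {α : ι → Set Ω} (hα : ∀ i, MeasurableSet (α i)) (pα : IsPart α) :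
    Tendsto (fun n : ℕ => (1 / (n + 1 : ℝ)) * condH P (joinAtoms S α (n + 1)) D) atTop
      (𝓝 (hPartCond P S α D)) := by
  have hsub := condH_joinAtoms_subadditive hS hD hSD hα pα
  have hb : BddBelow (range fun n : ℕ => condH P (joinAtoms S α n) D / n) := by
    refine ⟨0, ?_⟩
    rintro _ ⟨n, rfl⟩
    exact div_nonneg (condH_nonneg P hD (measurableSet_joinAtoms hS.measurable hα _)) (by simp)
  have hl := (hsub.tendsto_lim hb).comp (tendsto_add_atTop_nat 1)
  have e : ((fun n : ℕ => condH P (joinAtoms S α n) D / n) ∘ fun n => n + 1)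
      = fun n : ℕ => (1 / (n + 1 : ℝ)) * condH P (joinAtoms S α (n + 1)) D := by
    ext n; simp only [Function.comp_apply, Nat.cast_add, Nat.cast_one]; ring
  rw [e] at hl
  have hlim : hPartCond P S α D = hsub.lim := by
    apply le_antisymm
    · exact ge_of_tendsto' hl fun n => ciInf_le (bddBelow_condH P hS.measurable hD hα) n
    · refine le_ciInf fun n => ?_
      have := hsub.lim_le_div hb (Nat.succ_ne_zero n)
      refine this.trans (le_of_eq ?_)
      simp only [Nat.succ_eq_add_one, Nat.cast_add, Nat.cast_one]; ring
  rwa [hlim]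

lemma condH_joinAtoms_div_le {P : Measure Ω} [IsProbabilityMeasure P] {S : Ω → Ω}
    (hS : MeasurePreserving S P P) (hD : D ≤ m0) (hSD : D.comap S ≤ D) {ι : Type*} [Fintype ι]
    {α : ι → Set Ω} (hα : ∀ i, MeasurableSet (α i)) (pα : IsPart α) (n : ℕ) :
    (1 / (n + 1 : ℝ)) * condH P (joinAtoms S α (n + 1)) D
      ≤ Fintype.card (Fin 1 → ι) := by
  have hsub := condH_joinAtoms_subadditive hS hD hSD hα pα
  have h1 : condH P (joinAtoms S α (n * 1 + 1)) D
      ≤ n * condH P (joinAtoms S α 1) D + condH P (joinAtoms S α 1) D :=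
    hsub.apply_mul_add_le n 1 1
  have h2 := condH_le_card P hD (measurableSet_joinAtoms hS.measurable hα 1)
  rw [mul_one] at h1
  rw [one_div, inv_mul_le_iff₀ (by positivity)]
  nlinarith [(Nat.cast_nonneg n : (0 : ℝ) ≤ n)]

end Dynamics

/-! ### Conditioning additionally on a finite partition -/

section Partition

variable {Ω : Type*} {D D' : MeasurableSpace Ω} {m0 : MeasurableSpace Ω}

lemma integral_mul_condP (P : Measure Ω) [IsProbabilityMeasure P] (hD : D ≤ m0) {A d : Set Ω}
    (hA : MeasurableSet A) (hd : MeasurableSet[D] d) {h : Ω → ℝ} (hh : StronglyMeasurable[D] h)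
    (hb : ∀ᵐ x ∂P, h x ∈ Icc (0 : ℝ) 1) :
    ∫ x in d, A.indicator h x ∂P = ∫ x in d, condP P D A x * h x ∂P := by
  have e : A.indicator h = (A.indicator fun _ => (1 : ℝ)) * h := by
    ext x; by_cases hx : x ∈ A <;> simp [hx]
  have hi : Integrable h P := integrable_of_mem_Icc P (hh.mono hD).aestronglyMeasurable hb
  have hi' : Integrable ((A.indicator fun _ => (1 : ℝ)) * h) P := by
    rw [← e]; exact hi.indicator hA
  have := condExp_mul_of_stronglyMeasurable_right hh hi' (integrable_ind P hA)
  rw [e, ← setIntegral_condExp hD hi' hd]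
  exact integral_congr_ae (ae_restrict_of_ae this)

lemma mul_phi_div {f g : ℝ} (h : g = 0 → f = 0) :
    g * Real.negMulLog (f / g) = Real.negMulLog f + f * Real.log g := by
  by_cases hg : g = 0
  · simp [hg, h hg]
  by_cases hf : f = 0
  · simp [hf]
  unfold Real.negMulLog
  rw [Real.log_div hf hg]
  field_simp
  ring

lemma phi_sum_le {κ : Type*} [Fintype κ] {a : κ → ℝ} (ha : ∀ j, 0 ≤ a j) :
    Real.negMulLog (∑ j, a j) ≤ ∑ j, Real.negMulLog (a j) := by
  unfold Real.negMulLog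
  rw [← Finset.sum_neg_distrib, Finset.sum_mul]
  refine Finset.sum_le_sum fun j _ => ?_
  rcases (ha j).eq_or_lt with h | h
  · simp [← h]
  · have : Real.log (a j) ≤ Real.log (∑ j, a j) :=
      Real.log_le_log h (Finset.single_le_sum (fun j _ => ha j) (Finset.mem_univ j))
    nlinarith

lemma div_mem_Icc {f g : ℝ} (hf : 0 ≤ f) (h : f ≤ g) : f / g ∈ Icc (0 : ℝ) 1 :=
  ⟨div_nonneg hf (hf.trans h), div_le_one_of_le₀ h (hf.trans h)⟩

lemma stronglyMeasurable_ratio (P : Measure Ω) (A B : Set Ω) :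
    StronglyMeasurable[D] fun x => condP P D A x / condP P D B x := by
  have h1 : Measurable[D] (condP P D A) := stronglyMeasurable_condExp.measurable
  have h2 : Measurable[D] (condP P D B) := stronglyMeasurable_condExp.measurable
  exact (h1.div h2).stronglyMeasurable

/-- Bayes' formula: if, inside each cell `ξ j`, the σ-algebra `D'` agrees with `D`, then
`P(B | D')` equals `P(ξ j ∩ B | D) / P(ξ j | D)` on `ξ j`. -/
lemma condP_partition (P : Measure Ω) [IsProbabilityMeasure P] (hDD : D ≤ D') (hD' : D' ≤ m0)
    {κ : Type*} [Fintype κ] {ξ : κ → Set Ω} (hξ : ∀ j, MeasurableSet[D'] (ξ j)) (pξ : IsPart ξ)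
    (hcell : ∀ A, MeasurableSet[D'] A → ∀ j, ∃ d, MeasurableSet[D] d ∧ A ∩ ξ j = d ∩ ξ j)
    {B : Set Ω} (hB : MeasurableSet B) :
    (fun x => ∑ j, (ξ j).indicator (fun x => condP P D (B ∩ ξ j) x / condP P D (ξ j) x) x)
      =ᵐ[P] condP P D' B := by
  have hD := hDD.trans hD'
  have hr : ∀ j, ∀ᵐ x ∂P, condP P D (B ∩ ξ j) x / condP P D (ξ j) x ∈ Icc (0 : ℝ) 1 := by
    intro j
    filter_upwards [condP_mem P hD (hB.inter (hD' _ (hξ j))),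
      condP_mono (D := D) P (hB.inter (hD' _ (hξ j))) (hD' _ (hξ j)) inter_subset_right]
      with x h1 h2 using div_mem_Icc h1.1 h2
  have hint : ∀ j, Integrable
      ((ξ j).indicator fun x => condP P D (B ∩ ξ j) x / condP P D (ξ j) x) P := fun j =>
    (integrable_of_mem_Icc P ((stronglyMeasurable_ratio P _ _).mono hD).aestronglyMeasurable
      (hr j)).indicator (hD' _ (hξ j))
  refine ae_eq_condExp_of_forall_setIntegral_eq hD' (integrable_ind P hB)
    (fun s _ _ => (integrable_finsetSum _ fun j _ => hint j).integrableOn) ?_ ?_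
  · intro A hA _
    rw [integral_finsetSum _ fun j _ => (hint j).integrableOn]
    have e : ∀ x, B.indicator (fun _ => (1 : ℝ)) x
        = ∑ j, (B ∩ ξ j).indicator (fun _ => (1 : ℝ)) x := fun x => (pξ.sum_indicator B x).symm
    simp_rw [e]
    rw [integral_finsetSum _ fun j _ =>
      (integrable_ind P (hB.inter (hD' _ (hξ j)))).integrableOn]
    refine Finset.sum_congr rfl fun j _ => ?_
    obtain ⟨d, hd, hAd⟩ := hcell A hA j
    -- both integrals over `A` only see `A ∩ ξ j = d ∩ ξ j`, so `A` may be replaced by `d`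
    have swap : ∀ f : Ω → ℝ, ∫ x in A, (ξ j).indicator f x ∂P
        = ∫ x in d, (ξ j).indicator f x ∂P := by
      intro f
      rw [← integral_indicator (hD' _ hA), ← integral_indicator (hD _ hd)]
      rw [indicator_indicator, indicator_indicator, hAd]
    have e2 : (B ∩ ξ j).indicator (fun _ => (1 : ℝ))
        = (ξ j).indicator (B.indicator fun _ => (1 : ℝ)) := by
      rw [indicator_indicator, inter_comm]
    rw [e2, swap, swap, ← e2,
      integral_mul_condP P hD (hD' _ (hξ j)) hd (stronglyMeasurable_ratio P _ _) (hr j),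
      ← setIntegral_condExp hD (integrable_ind P (hB.inter (hD' _ (hξ j)))) hd]
    refine integral_congr_ae (ae_restrict_of_ae ?_)
    filter_upwards [condP_mem P hD (hB.inter (hD' _ (hξ j))),
      condP_mono (D := D) P (hB.inter (hD' _ (hξ j))) (hD' _ (hξ j)) inter_subset_right]
      with x h1 h2
    change _ = condP P D (B ∩ ξ j) x
    refine mul_div_cancel_of_imp' fun h0 => ?_
    rw [h0] at h2
    exact le_antisymm h2 h1.1
  · have : Measurable[D'] fun x =>
        ∑ j, (ξ j).indicator (fun x => condP P D (B ∩ ξ j) x / condP P D (ξ j) x) x :=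
      Finset.measurable_sum _ fun j _ =>
        (((stronglyMeasurable_ratio P _ _).mono hDD).measurable).indicator (hξ j)
    exact this.stronglyMeasurable.aestronglyMeasurable

/-- Refining the conditioning σ-algebra by a partition with `N` cells lowers entropy by at most a
constant depending only on `N`. -/
lemma condH_le_add_card (P : Measure Ω) [IsProbabilityMeasure P] (hDD : D ≤ D') (hD' : D' ≤ m0)
    {κ : Type*} [Fintype κ] {ξ : κ → Set Ω} (hξ : ∀ j, MeasurableSet[D'] (ξ j)) (pξ : IsPart ξ)
    (hcell : ∀ A, MeasurableSet[D'] A → ∀ j, ∃ d, MeasurableSet[D] d ∧ A ∩ ξ j = d ∩ ξ j)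
    {ι : Type*} [Fintype ι] {β : ι → Set Ω} (hβ : ∀ i, MeasurableSet (β i)) (pβ : IsPart β) :
    condH P β D ≤ condH P β D' + Fintype.card κ := by
  have hD := hDD.trans hD'
  have hξ' : ∀ j, MeasurableSet (ξ j) := fun j => hD' _ (hξ j)
  have hm : ∀ i j, MeasurableSet (β i ∩ ξ j) := fun i j => (hβ i).inter (hξ' j)
  have hr : ∀ i j, ∀ᵐ x ∂P, condP P D (β i ∩ ξ j) x / condP P D (ξ j) x ∈ Icc (0 : ℝ) 1 := by
    intro i j
    filter_upwards [condP_mem P hD (hm i j),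
      condP_mono (D := D) P (hm i j) (hξ' j) inter_subset_right]
      with x h1 h2 using div_mem_Icc h1.1 h2
  have hφm : ∀ i j, StronglyMeasurable[D]
      fun x => Real.negMulLog (condP P D (β i ∩ ξ j) x / condP P D (ξ j) x) := fun i j =>
    Real.continuous_negMulLog.comp_stronglyMeasurable (stronglyMeasurable_ratio P _ _)
  have hφb : ∀ i j, ∀ᵐ x ∂P,
      Real.negMulLog (condP P D (β i ∩ ξ j) x / condP P D (ξ j) x) ∈ Icc (0 : ℝ) 1 := fun i j =>
    (hr i j).mono fun _ hx => phi_mem hx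
  have hφi : ∀ i j, Integrable
      (fun x => Real.negMulLog (condP P D (β i ∩ ξ j) x / condP P D (ξ j) x)) P := fun i j =>
    integrable_of_mem_Icc P ((hφm i j).mono hD).aestronglyMeasurable (hφb i j)
  have hgi : ∀ i j, Integrable (fun x => condP P D (ξ j) x *
      Real.negMulLog (condP P D (β i ∩ ξ j) x / condP P D (ξ j) x)) P := by
    intro i j
    refine integrable_of_mem_Icc P ((aesm_condP P hD _).mul (hφi i j).aestronglyMeasurable) ?_
    filter_upwards [hφb i j, condP_mem P hD (hξ' j)] with x h1 h2
    exact ⟨mul_nonneg h2.1 h1.1, mul_le_one₀ h2.2 h1.1 h1.2⟩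
  have hH' : condH P β D' = ∫ x, ∑ i, ∑ j, condP P D (ξ j) x *
      Real.negMulLog (condP P D (β i ∩ ξ j) x / condP P D (ξ j) x) ∂P := by
    rw [integral_finsetSum _ fun i _ => integrable_finsetSum _ fun j _ => hgi i j]
    refine Finset.sum_congr rfl fun i _ => ?_
    change ∫ x, Real.negMulLog (condP P D' (β i) x) ∂P = _
    rw [integral_finsetSum _ fun j _ => hgi i j]
    have e1 : ∫ x, Real.negMulLog (condP P D' (β i) x) ∂P = ∫ x, ∑ j, (ξ j).indicator
        (fun x => Real.negMulLog (condP P D (β i ∩ ξ j) x / condP P D (ξ j) x)) x ∂P := by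
      refine integral_congr_ae ?_
      filter_upwards [condP_partition P hDD hD' hξ pξ hcell (hβ i)] with x hx
      rw [← hx]
      obtain ⟨j, hj, hu⟩ := pξ x
      have hne : ∀ k, k ≠ j → x ∉ ξ k := fun k hk h => hk (hu k h)
      rw [Finset.sum_eq_single j (fun k _ hk => indicator_of_notMem (hne k hk) _) (by simp),
        Finset.sum_eq_single j (fun k _ hk => indicator_of_notMem (hne k hk) _) (by simp),
        indicator_of_mem hj, indicator_of_mem hj]
    rw [e1, integral_finsetSum _ fun j _ => (hφi i j).indicator (hξ' j)]
    refine Finset.sum_congr rfl fun j _ => ?_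
    have := integral_mul_condP P hD (hξ' j) MeasurableSet.univ (hφm i j) (hφb i j)
    simpa using this
  have hHi : Integrable (fun x => ∑ i, ∑ j, condP P D (ξ j) x *
      Real.negMulLog (condP P D (β i ∩ ξ j) x / condP P D (ξ j) x)) P :=
    integrable_finsetSum _ fun i _ => integrable_finsetSum _ fun j _ => hgi i j
  have hc : (Fintype.card κ : ℝ) = ∫ _x, (Fintype.card κ : ℝ) ∂P := by simp
  rw [hH', hc, ← integral_add hHi (integrable_const _), condH_eq_integral P hD hβ]
  refine integral_mono_ae (integrable_finsetSum _ fun i _ => integrable_phi_condP P hD (hβ i))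
    (hHi.add (integrable_const _)) ?_
  have a1 : ∀ᵐ x ∂P, ∀ i j, condP P D (β i ∩ ξ j) x ∈ Icc (0 : ℝ) 1 :=
    ae_all_iff.2 fun i => ae_all_iff.2 fun j => condP_mem P hD (hm i j)
  have a2 : ∀ᵐ x ∂P, ∀ i, ∑ j, condP P D (β i ∩ ξ j) x = condP P D (β i) x :=
    ae_all_iff.2 fun i => condP_sum P pξ hξ' (hβ i)
  have a3 : ∀ᵐ x ∂P, ∀ j, ∑ i, condP P D (ξ j ∩ β i) x = condP P D (ξ j) x :=
    ae_all_iff.2 fun j => condP_sum P pβ hβ (hξ' j)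
  have a4 : ∀ᵐ x ∂P, ∀ i j, condP P D (β i ∩ ξ j) x ≤ condP P D (ξ j) x :=
    ae_all_iff.2 fun i => ae_all_iff.2 fun j => condP_mono P (hm i j) (hξ' j) inter_subset_right
  have a5 : ∀ᵐ x ∂P, ∀ j, condP P D (ξ j) x ∈ Icc (0 : ℝ) 1 :=
    ae_all_iff.2 fun j => condP_mem P hD (hξ' j)
  filter_upwards [a1, a2, a3, a4, a5] with x h1 h2 h3 h4 h5
  have k1 : ∀ i j, condP P D (ξ j) x *
      Real.negMulLog (condP P D (β i ∩ ξ j) x / condP P D (ξ j) x)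
      = Real.negMulLog (condP P D (β i ∩ ξ j) x)
        + condP P D (β i ∩ ξ j) x * Real.log (condP P D (ξ j) x) := fun i j =>
    mul_phi_div fun h0 => le_antisymm (h0 ▸ h4 i j) (h1 i j).1
  change _ ≤ (∑ i, ∑ j, _) + (Fintype.card κ : ℝ)
  simp_rw [k1, Finset.sum_add_distrib]
  have k2 : ∑ i, Real.negMulLog (condP P D (β i) x)
      ≤ ∑ i, ∑ j, Real.negMulLog (condP P D (β i ∩ ξ j) x) :=
    Finset.sum_le_sum fun i _ => by rw [← h2 i]; exact phi_sum_le fun j => (h1 i j).1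
  have k3 : ∑ i, ∑ j, condP P D (β i ∩ ξ j) x * Real.log (condP P D (ξ j) x)
      = -∑ j, Real.negMulLog (condP P D (ξ j) x) := by
    rw [Finset.sum_comm, ← Finset.sum_neg_distrib]
    refine Finset.sum_congr rfl fun j _ => ?_
    rw [← Finset.sum_mul]
    have : ∑ i, condP P D (β i ∩ ξ j) x = condP P D (ξ j) x := by
      rw [← h3 j]; exact Finset.sum_congr rfl fun i _ => by rw [inter_comm]
    rw [this, Real.negMulLog]; ring
  have k4 : ∑ j, Real.negMulLog (condP P D (ξ j) x) ≤ Fintype.card κ := by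
    calc _ ≤ ∑ _j : κ, (1 : ℝ) := Finset.sum_le_sum fun j _ => (phi_mem (h5 j)).2
      _ = _ := by simp
  rw [k3]
  linarith

end Partition

/-! ### Disintegration: conditional entropy on the joint space -/


section Fibre

variable {E X γ : Type*} [mE : MeasurableSpace E] [mX : MeasurableSpace X] [mγ : MeasurableSpace γ]
  [MeasurableSpace.CountablyGenerated γ]

/-- For a kernel `κ` and a countably generated σ-algebra `σ(g)`, the conditional probabilities
`κ e (B | σ(g))` can be chosen jointly measurably in `(e, g x)`. -/
lemma exists_fibre_density (κ : Kernel E X) [IsMarkovKernel κ] {g : X → γ} (hg : Measurable g)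
    {B : Set X} (hB : MeasurableSet B) :
    ∃ f : E × γ → ℝ, Measurable f ∧ (∀ p, f p ∈ Icc (0 : ℝ) 1) ∧
      ∀ e, (fun x => f (e, g x)) =ᵐ[κ e] condP (κ e) (mγ.comap g) B := by
  have hgx : Measurable fun x => (g x, x) := hg.prodMk measurable_id
  -- the joint law of `(g x, x)` in each fibre, disintegrated along the first coordinate
  obtain ⟨κ', hκ'⟩ : ∃ κ' : Kernel E (γ × X), κ' = κ.map fun x => (g x, x) := ⟨_, rfl⟩
  have : IsMarkovKernel κ' := hκ' ▸ Kernel.IsMarkovKernel.map κ hgx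
  have hν : ∀ e, Kernel.fst κ' e = (κ e).map g := by
    intro e
    rw [hκ', Kernel.fst_apply, Kernel.map_apply _ hgx, Measure.map_map measurable_fst hgx]
    rfl
  have hset : ∀ (e : E) (t : Set γ), MeasurableSet t →
      (κ' e).real (t ×ˢ B) = (κ e).real (B ∩ g ⁻¹' t) := by
    intro e t ht
    rw [measureReal_def, measureReal_def, hκ', Kernel.map_apply' _ hgx _ (ht.prod hB)]
    congr 2
    ext x
    simp [and_comm]
  obtain ⟨f, hmeas, hmem, hden⟩ : ∃ f : E × γ → ℝ, Measurable f ∧ (∀ p, f p ∈ Icc (0 : ℝ) 1) ∧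
      ∀ (e : E) (t : Set γ), MeasurableSet t →
        ∫ y in t, f (e, y) ∂((κ e).map g) = (κ e).real (B ∩ g ⁻¹' t) := by
    refine ⟨fun p => Kernel.density κ' (Kernel.fst κ') p.1 p.2 B,
      Kernel.measurable_density κ' (Kernel.fst κ') hB, fun p =>
      ⟨Kernel.density_nonneg le_rfl _ _ _, Kernel.density_le_one le_rfl _ _ _⟩, fun e t ht => ?_⟩
    rw [← hset e t ht, ← hν]
    exact Kernel.setIntegral_density le_rfl e hB ht
  refine ⟨f, hmeas, hmem, fun e => ?_⟩
  have hme : Measurable fun y => f (e, y) := hmeas.comp measurable_prodMk_left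
  have hint : Integrable (fun x => f (e, g x)) (κ e) :=
    integrable_of_mem_Icc _ (hme.comp hg).aestronglyMeasurable (ae_of_all _ fun x => hmem (e, g x))
  refine ae_eq_condExp_of_forall_setIntegral_eq hg.comap_le (integrable_ind _ hB)
    (fun s _ _ => hint.integrableOn) ?_ ?_
  · rintro s ⟨t, ht, rfl⟩ -
    have h1 := hden e t ht
    rw [setIntegral_map ht hme.aestronglyMeasurable hg.aemeasurable] at h1
    rw [h1, integral_indicator hB, Measure.restrict_restrict hB]
    simp
  · exact (hme.comp (comap_measurable g)).stronglyMeasurable.aestronglyMeasurable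

lemma measurable_condH_fibre (κ : Kernel E X) [IsMarkovKernel κ] {g : X → γ} (hg : Measurable g)
    {ι : Type*} [Fintype ι] {β : ι → Set X} (hβ : ∀ i, MeasurableSet (β i)) :
    Measurable fun e => condH (κ e) β (mγ.comap g) := by
  refine Finset.measurable_sum _ fun i _ => ?_
  obtain ⟨f, hf, -, hfe⟩ := exists_fibre_density κ hg (hβ i)
  have e1 : (fun e => ∫ x, Real.negMulLog (condP (κ e) (mγ.comap g) (β i) x) ∂(κ e))
      = fun e => ∫ x, Real.negMulLog (f (e, g x)) ∂(κ e) := funext fun e =>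
    integral_congr_ae ((hfe e).mono fun x hx => by simp only [← hx])
  change Measurable fun e => ∫ x, Real.negMulLog (condP (κ e) (mγ.comap g) (β i) x) ∂(κ e)
  rw [e1]
  have hF : Measurable fun p : E × X => Real.negMulLog (f (p.1, g p.2)) :=
    Real.continuous_negMulLog.measurable.comp
      (hf.comp (measurable_fst.prodMk (hg.comp measurable_snd)))
  exact (StronglyMeasurable.integral_kernel_prod_right' (κ := κ) hF.stronglyMeasurable).measurable

/-- On the space `E × X` with the joint law, conditioning on `E` and on `σ(g)` together is the same
as conditioning on `σ(g)` in each fibre. -/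
lemma condH_compProd (η : Measure E) [IsProbabilityMeasure η] (κ : Kernel E X) [IsMarkovKernel κ]
    {g : X → γ} (hg : Measurable g) {ι : Type*} [Fintype ι] {β : ι → Set X}
    (hβ : ∀ i, MeasurableSet (β i)) :
    condH (η ⊗ₘ κ) (fun i => Prod.snd ⁻¹' β i)
        ((inferInstance : MeasurableSpace (E × γ)).comap (Prod.map id g))
      = ∫ e, condH (κ e) β (mγ.comap g) ∂η := by
  have hG : Measurable (Prod.map (id : E → E) g) := measurable_id.prodMap hg
  unfold condH
  rw [integral_finsetSum]
  swap
  · intro i _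
    have hm := measurable_condH_fibre κ hg (ι := Unit) (β := fun _ => β i) fun _ => hβ i
    have h1 : ∀ e, condH (κ e) (fun _ : Unit => β i) (mγ.comap g) ∈ Icc (0 : ℝ) 1 := fun e =>
      ⟨condH_nonneg (κ e) hg.comap_le fun _ => hβ i, by
        simpa using condH_le_card (κ e) hg.comap_le (ι := Unit) (β := fun _ => β i) fun _ => hβ i⟩
    have := integrable_of_mem_Icc η hm.aestronglyMeasurable (ae_of_all _ h1)
    simpa [condH] using this
  refine Finset.sum_congr rfl fun i _ => ?_
  obtain ⟨f, hf, hf01, hfe⟩ := exists_fibre_density κ hg (hβ i)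
  have hfG : Measurable fun p : E × X => f (p.1, g p.2) := hf.comp hG
  have hint : Integrable (fun p : E × X => f (p.1, g p.2)) (η ⊗ₘ κ) :=
    integrable_of_mem_Icc _ hfG.aestronglyMeasurable (ae_of_all _ fun p => hf01 _)
  have hB : MeasurableSet (Prod.snd ⁻¹' β i : Set (E × X)) := measurable_snd (hβ i)
  have key : (fun p : E × X => f (p.1, g p.2)) =ᵐ[η ⊗ₘ κ] condP (η ⊗ₘ κ)
      ((inferInstance : MeasurableSpace (E × γ)).comap (Prod.map id g)) (Prod.snd ⁻¹' β i) := by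
    refine ae_eq_condExp_of_forall_setIntegral_eq hG.comap_le (integrable_ind _ hB)
      (fun s _ _ => hint.integrableOn) ?_ ?_
    · rintro s ⟨t, ht, rfl⟩ -
      have hs : MeasurableSet (Prod.map (id : E → E) g ⁻¹' t) := hG ht
      rw [← integral_indicator hs, ← integral_indicator hs,
        Measure.integral_compProd (hint.indicator hs),
        Measure.integral_compProd ((integrable_ind _ hB).indicator hs)]
      refine integral_congr_ae (ae_of_all _ fun e => ?_)
      have ht' : MeasurableSet {y | (e, y) ∈ t} := measurable_prodMk_left ht
      have hs' : MeasurableSet (g ⁻¹' {y | (e, y) ∈ t}) := hg ht'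
      change ∫ x, (g ⁻¹' {y | (e, y) ∈ t}).indicator (fun x => f (e, g x)) x ∂(κ e)
        = ∫ x, (g ⁻¹' {y | (e, y) ∈ t}).indicator ((β i).indicator fun _ => (1 : ℝ)) x ∂(κ e)
      rw [integral_indicator hs', integral_indicator hs',
        ← setIntegral_condExp hg.comap_le (integrable_ind (κ e) (hβ i)) ⟨_, ht', rfl⟩]
      exact integral_congr_ae (ae_restrict_of_ae (hfe e))
    · exact (hf.comp (comap_measurable (Prod.map (id : E → E) g))
        ).stronglyMeasurable.aestronglyMeasurable
  change ∫ p, Real.negMulLog (condP (η ⊗ₘ κ)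
      ((inferInstance : MeasurableSpace (E × γ)).comap (Prod.map id g))
      (Prod.snd ⁻¹' β i) p) ∂(η ⊗ₘ κ)
    = ∫ e, ∫ x, Real.negMulLog (condP (κ e) (mγ.comap g) (β i) x) ∂(κ e) ∂η
  have e1 := integral_congr_ae (key.mono fun p hp => congrArg Real.negMulLog hp)
  rw [← e1, Measure.integral_compProd
    (integrable_phi _ hfG.aestronglyMeasurable (ae_of_all _ fun p => hf01 _))]
  refine integral_congr_ae (ae_of_all _ fun e => integral_congr_ae ?_)
  exact (hfe e).mono fun x hx => congrArg Real.negMulLog hx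

end Fibre

/-! ### The integral formula over a countably generated parameter space -/

section Joint

variable {E X : Type*} {F : MeasurableSpace E} {C : MeasurableSpace X}

lemma comap_snd_le_prod : C.comap Prod.snd ≤ F.prod C := le_sup_right

lemma comap_prodMap_le {T : X → X} (hTC : C.comap T ≤ C) :
    (F.prod C).comap (Prod.map id T) ≤ F.prod C := by
  have h1 : @Measurable _ _ (F.prod C) C (Prod.snd : E × X → X) := fun s hs =>
    (comap_snd_le_prod : _ ≤ F.prod C) _ ⟨s, hs, rfl⟩
  rw [MeasurableSpace.prod, MeasurableSpace.comap_sup, MeasurableSpace.comap_comp,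
    MeasurableSpace.comap_comp]
  refine sup_le_sup le_rfl ?_
  change C.comap (T ∘ Prod.snd) ≤ _
  rw [← MeasurableSpace.comap_comp]
  exact MeasurableSpace.comap_mono hTC

lemma joinAtoms_snd (T : X → X) {ι : Type*} (α : ι → Set X) (n : ℕ) :
    joinAtoms (Prod.map (id : E → E) T) (fun i => Prod.snd ⁻¹' α i) n
      = fun s => Prod.snd ⁻¹' joinAtoms T α n s := by
  ext s p
  simp [joinAtoms, Prod.map_iterate]

/-- If every `F`-measurable set contains or avoids `p`, then over `p` the σ-algebras `F ⊗ C` and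
`C` have the same trace. -/
lemma cell_trace {p : Set E}
    (hp : ∀ s, MeasurableSet[F] s → p ⊆ s ∨ Disjoint p s) {A : Set (E × X)}
    (hA : MeasurableSet[F.prod C] A) :
    ∃ d, MeasurableSet[C.comap Prod.snd] d ∧ A ∩ Prod.fst ⁻¹' p = d ∩ Prod.fst ⁻¹' p := by
  rcases p.eq_empty_or_nonempty with rfl | ⟨e₀, he₀⟩
  · exact ⟨∅, @MeasurableSet.empty _ (C.comap Prod.snd), by simp⟩
  have h1 : MeasurableSet[C] (Prod.mk e₀ ⁻¹' A) :=
    (@measurable_prodMk_left E X F C e₀) hA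
  refine ⟨Prod.snd ⁻¹' (Prod.mk e₀ ⁻¹' A), ⟨_, h1, rfl⟩, ?_⟩
  ext ⟨e, x⟩
  simp only [mem_inter_iff, mem_preimage]
  refine and_congr_left fun he => ?_
  have h2 : MeasurableSet[F] ((fun e => (e, x)) ⁻¹' A) :=
    (@measurable_prodMk_right E X F C x) hA
  rcases hp _ h2 with h | h
  · exact iff_of_true (h he) (h he₀)
  · exact iff_of_false (fun h' => disjoint_left.1 h he h') fun h' => disjoint_left.1 h he₀ h'

variable [mE : MeasurableSpace E] [mX : MeasurableSpace X]

lemma prod_le (hF : F ≤ mE) (hC : C ≤ mX) :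
    F.prod C ≤ (inferInstance : MeasurableSpace (E × X)) :=
  sup_le_sup (MeasurableSpace.comap_mono hF) (MeasurableSpace.comap_mono hC)

lemma condH_prod (η : Measure E) [IsProbabilityMeasure η] (κ : Kernel E X) [IsMarkovKernel κ]
    (hC : C ≤ mX) (hCG : @MeasurableSpace.CountablyGenerated X C) {ι : Type*} [Fintype ι]
    {β : ι → Set X} (hβ : ∀ i, MeasurableSet (β i)) :
    condH (η ⊗ₘ κ) (fun i => Prod.snd ⁻¹' β i) (mE.prod C) = ∫ e, condH (κ e) β C ∂η := by
  have h := @condH_compProd E X X mE mX C hCG η _ κ _ id (measurable_id.mono le_rfl hC) ι _ β hβ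
  simp only [Prod.map_id, MeasurableSpace.comap_id] at h
  exact h

lemma measurable_condH (κ : Kernel E X) [IsMarkovKernel κ]
    (hC : C ≤ mX) (hCG : @MeasurableSpace.CountablyGenerated X C) {ι : Type*} [Fintype ι]
    {β : ι → Set X} (hβ : ∀ i, MeasurableSet (β i)) :
    Measurable fun e => condH (κ e) β C := by
  have h := @measurable_condH_fibre E X X mE mX C hCG κ _ id (measurable_id.mono le_rfl hC) ι _ β hβ
  simpa only [MeasurableSpace.comap_id] using h

lemma countablePartition_atom [MeasurableSpace.CountablyGenerated E] (k : ℕ) {p : Set E}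
    (hp : p ∈ MeasurableSpace.countablePartition E k) (s : Set E)
    (hs : MeasurableSet[countableFiltration E k] s) : p ⊆ s ∨ Disjoint p s := by
  obtain ⟨S, hS, rfl⟩ :=
    (MeasurableSpace.measurableSet_generateFrom_countablePartition_iff k s).1 hs
  by_cases h : p ∈ S
  · exact Or.inl (subset_sUnion_of_mem h)
  · refine Or.inr (disjoint_sUnion_right.2 fun q hq => ?_)
    refine MeasurableSpace.disjoint_countablePartition hp (hS hq) ?_
    rintro rfl
    exact h hq

lemma isPart_countablePartition [MeasurableSpace.CountablyGenerated E] (k : ℕ) :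
    IsPart fun p : MeasurableSpace.countablePartition E k => (p : Set E) := by
  intro e
  obtain ⟨p, hp, hep⟩ := mem_sUnion.1
    ((MeasurableSpace.sUnion_countablePartition E k).symm ▸ mem_univ e)
  refine ⟨⟨p, hp⟩, hep, fun q hq => Subtype.ext ?_⟩
  by_contra hne
  exact disjoint_left.1 (MeasurableSpace.disjoint_countablePartition q.2 hp hne) hq hep

/-- Conditioning on a finite stage of a countably generated `E` costs a bounded amount of
entropy. -/
lemma condH_le_stage [MeasurableSpace.CountablyGenerated E] (P : Measure (E × X))
    [IsProbabilityMeasure P] (hC : C ≤ mX) (k : ℕ) :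
    ∃ c : ℝ, ∀ {ι : Type _} [Fintype ι] {β : ι → Set (E × X)}, (∀ i, MeasurableSet (β i)) →
      IsPart β → condH P β (C.comap Prod.snd)
        ≤ condH P β ((countableFiltration E k : MeasurableSpace E).prod C) + c := by
  have : Fintype (MeasurableSpace.countablePartition E k) := Fintype.ofFinite _
  refine ⟨Fintype.card (MeasurableSpace.countablePartition E k), fun {ι} _ β hβ pβ => ?_⟩
  refine condH_le_add_card P comap_snd_le_prod (prod_le ((countableFiltration E).le k) hC)
    (ξ := fun p : MeasurableSpace.countablePartition E k => Prod.fst ⁻¹' (p : Set E)) ?_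
    ((isPart_countablePartition k).preimage Prod.fst) ?_ hβ pβ
  · intro p
    have : MeasurableSet[(countableFiltration E k).comap Prod.fst]
      (Prod.fst ⁻¹' (p : Set E) : Set (E × X)) :=
      ⟨_, measurableSet_countableFiltration_of_mem k p.2, rfl⟩
    exact (le_sup_left : _ ≤ (countableFiltration E k : MeasurableSpace E).prod C) _ this
  · intro A hA p
    exact cell_trace (countablePartition_atom k p.2) hA

/-- Lévy's upward theorem for conditional entropy. -/
lemma tendsto_condH_filtration {Ω : Type*} {m0 : MeasurableSpace Ω} (P : Measure Ω)
    [IsProbabilityMeasure P] (ℱ : Filtration ℕ m0) {ι : Type*} [Fintype ι] {β : ι → Set Ω}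
    (hβ : ∀ i, MeasurableSet (β i)) :
    Tendsto (fun k => condH P β (ℱ k)) atTop (𝓝 (condH P β (⨆ k, ℱ k))) := by
  refine tendsto_finsetSum _ fun i _ => ?_
  change Tendsto (fun k => ∫ x, Real.negMulLog (condP P (ℱ k) (β i) x) ∂P) atTop
    (𝓝 (∫ x, Real.negMulLog (condP P (⨆ k, ℱ k) (β i) x) ∂P))
  refine tendsto_integral_of_dominated_convergence (fun _ => 1)
    (fun k => (integrable_phi_condP P (ℱ.le k) (hβ i)).aestronglyMeasurable)
    (integrable_const 1) (fun k => ?_) ?_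
  · filter_upwards [condP_mem P (ℱ.le k) (hβ i)] with x hx
    rw [Real.norm_eq_abs, abs_of_nonneg (phi_mem hx).1]
    exact (phi_mem hx).2
  · filter_upwards [tendsto_ae_condExp (μ := P) (ℱ := ℱ) ((β i).indicator fun _ => (1 : ℝ))]
      with x hx
    exact (Real.continuous_negMulLog.tendsto _).comp hx

/-- The filtration `F_k ⊗ C`, where `F_k` increases to the σ-algebra of `E`. -/
noncomputable def stageFiltration [MeasurableSpace.CountablyGenerated E] (hC : C ≤ mX) :
    Filtration ℕ (inferInstance : MeasurableSpace (E × X)) where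
  seq k := (countableFiltration E k : MeasurableSpace E).prod C
  mono' _ _ h := sup_le_sup (MeasurableSpace.comap_mono ((countableFiltration E).mono h)) le_rfl
  le' k := prod_le ((countableFiltration E).le k) hC

lemma iSup_stageFiltration [MeasurableSpace.CountablyGenerated E] (hC : C ≤ mX) :
    ⨆ k, stageFiltration (E := E) hC k = mE.prod C := by
  change ⨆ k, ((countableFiltration E k).comap Prod.fst ⊔ C.comap Prod.snd) = _
  rw [← iSup_sup, ← MeasurableSpace.comap_iSup, iSup_countableFiltration]
  rfl

lemma measurePreserving_prodMap {η : Measure E} [IsProbabilityMeasure η] {κ : Kernel E X}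
    [IsMarkovKernel κ] {T : X → X} (hTm : Measurable T)
    (hinv : ∀ᵐ e ∂η, MeasurePreserving T (κ e) (κ e)) :
    MeasurePreserving (Prod.map (id : E → E) T) (η ⊗ₘ κ) (η ⊗ₘ κ) := by
  have hm : Measurable (Prod.map (id : E → E) T) := measurable_id.prodMap hTm
  refine ⟨hm, Measure.ext fun s hs => ?_⟩
  rw [Measure.map_apply hm hs, Measure.compProd_apply hs, Measure.compProd_apply (hm hs)]
  refine lintegral_congr_ae (hinv.mono fun e he => ?_)
  exact he.measure_preimage (measurable_prodMk_left hs).nullMeasurableSet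

lemma measurePreserving_snd {η : Measure E} [IsProbabilityMeasure η] {κ : Kernel E X}
    [IsMarkovKernel κ] {μ : Measure X}
    (hdis : ∀ s : Set X, MeasurableSet s → μ s = ∫⁻ e, κ e s ∂η) :
    MeasurePreserving Prod.snd (η ⊗ₘ κ) μ := by
  refine ⟨measurable_snd, Measure.ext fun s hs => ?_⟩
  rw [Measure.map_apply measurable_snd hs, Measure.compProd_apply (measurable_snd hs), hdis s hs]
  rfl

lemma measurable_hPartCond (κ : Kernel E X) [IsMarkovKernel κ] {T : X → X} (hTm : Measurable T)
    (hC : C ≤ mX) (hCG : @MeasurableSpace.CountablyGenerated X C) {ι : Type*} [Fintype ι]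
    {α : ι → Set X} (hα : ∀ i, MeasurableSet (α i)) :
    Measurable fun e => hPartCond (κ e) T α C :=
  Measurable.iInf fun n =>
    (measurable_condH κ hC hCG (measurableSet_joinAtoms hTm hα (n + 1))).const_mul _

/-- The averages of the normalised fibre entropies converge to the average fibre entropy. -/
lemma tendsto_integral_condH {η : Measure E} [IsProbabilityMeasure η] {κ : Kernel E X}
    [IsMarkovKernel κ] {T : X → X} (hTm : Measurable T)
    (hinv : ∀ᵐ e ∂η, MeasurePreserving T (κ e) (κ e))
    (hC : C ≤ mX) (hCG : @MeasurableSpace.CountablyGenerated X C) (hTC : C.comap T ≤ C)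
    {ι : Type*} [Fintype ι] {α : ι → Set X} (hα : ∀ i, MeasurableSet (α i)) (pα : IsPart α) :
    Tendsto (fun n : ℕ => (1 / (n + 1 : ℝ)) * ∫ e, condH (κ e) (joinAtoms T α (n + 1)) C ∂η) atTop
      (𝓝 (∫ e, hPartCond (κ e) T α C ∂η)) := by
  simp_rw [← integral_const_mul]
  refine tendsto_integral_of_dominated_convergence (fun _ => (Fintype.card (Fin 1 → ι) : ℝ))
    (fun n => ((measurable_condH κ hC hCG
      (measurableSet_joinAtoms hTm hα (n + 1))).const_mul _).aestronglyMeasurable)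
    (integrable_const _) (fun n => ?_) ?_
  · filter_upwards [hinv] with e he
    rw [Real.norm_eq_abs, abs_of_nonneg]
    · exact condH_joinAtoms_div_le he hC hTC hα pα n
    · exact mul_nonneg (by positivity) (condH_nonneg _ hC (measurableSet_joinAtoms hTm hα _))
  · filter_upwards [hinv] with e he using tendsto_hPartCond he hC hTC hα pα

/-- The integral formula over a countably generated parameter space. -/
lemma hPartCond_eq_integral [MeasurableSpace.CountablyGenerated E] {η : Measure E}
    [IsProbabilityMeasure η] {κ : Kernel E X} [IsMarkovKernel κ] {μ : Measure X}
    [IsProbabilityMeasure μ] {T : X → X} (hT : MeasurePreserving T μ μ)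
    (hinv : ∀ᵐ e ∂η, MeasurePreserving T (κ e) (κ e))
    (hdis : ∀ s : Set X, MeasurableSet s → μ s = ∫⁻ e, κ e s ∂η)
    (hC : C ≤ mX) (hCG : @MeasurableSpace.CountablyGenerated X C) (hTC : C.comap T ≤ C)
    {ι : Type*} [Fintype ι] {α : ι → Set X} (hα : ∀ i, MeasurableSet (α i)) (pα : IsPart α) :
    hPartCond μ T α C = ∫ e, hPartCond (κ e) T α C ∂η := by
  have hP := measurePreserving_snd (κ := κ) hdis
  have hS := measurePreserving_prodMap (κ := κ) hT.measurable hinv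
  have hm := measurableSet_joinAtoms hT.measurable hα
  have hm' : ∀ n s, MeasurableSet (Prod.snd ⁻¹' joinAtoms T α n s : Set (E × X)) :=
    fun n s => measurable_snd (hm n s)
  have hμn : ∀ n, condH (η ⊗ₘ κ) (fun s => Prod.snd ⁻¹' joinAtoms T α n s) (C.comap Prod.snd)
      = condH μ (joinAtoms T α n) C := fun n => condH_comap hP hC (hm n)
  have hκn := fun n => condH_prod η κ hC hCG (hm n)
  have hlim := tendsto_integral_condH hT.measurable hinv hC hCG hTC hα pα
  have hlimμ := tendsto_hPartCond hT hC hTC hα pα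
  refine le_antisymm ?_ ?_
  · -- it suffices to bound by each finite level `n` of the fibre entropies, then `n → ∞`
    refine ge_of_tendsto' hlim fun n => ?_
    rw [← hκn, ← iSup_stageFiltration hC]
    have hlev := tendsto_condH_filtration (η ⊗ₘ κ) (stageFiltration (E := E) hC) (hm' (n + 1))
    refine ge_of_tendsto' (hlev.const_mul _) fun k => ?_
    have hDk : stageFiltration (E := E) hC k ≤ _ := (stageFiltration hC).le k
    have hlimk := tendsto_hPartCond hS hDk (comap_prodMap_le hTC) (fun i => measurable_snd (hα i))
      (pα.preimage Prod.snd)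
    have hinf := ciInf_le (bddBelow_condH (η ⊗ₘ κ) hS.measurable hDk
      (fun i => measurable_snd (hα i))) n
    simp only [joinAtoms_snd] at hlimk hinf
    refine le_trans ?_ hinf
    -- at stage `k` the entropies differ by a constant, which disappears after division by `n`
    obtain ⟨c, hc⟩ := condH_le_stage (η ⊗ₘ κ) hC k
    have hz : Tendsto (fun n : ℕ => (1 / (n + 1 : ℝ)) * c) atTop (𝓝 0) := by
      simpa using tendsto_one_div_add_atTop_nhds_zero_nat.mul_const c
    have := le_of_tendsto_of_tendsto' hlimμ (hlimk.add hz) fun n => by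
      rw [← mul_add, ← hμn]
      exact mul_le_mul_of_nonneg_left
        (hc (hm' (n + 1)) ((pα.joinAtoms T (n + 1)).preimage Prod.snd)) (by positivity)
    simpa [hPartCond, joinAtoms_snd] using this
  · refine le_of_tendsto_of_tendsto' hlim hlimμ fun n => ?_
    rw [← hκn, ← hμn]
    exact mul_le_mul_of_nonneg_left
      (condH_anti _ comap_snd_le_prod (prod_le le_rfl hC) (hm' (n + 1))) (by positivity)

end Joint

/-! ### Reduction to a countably generated parameter space -/

section Reduction

variable {E X : Type*} [mE : MeasurableSpace E] [mX : MeasurableSpace X]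

lemma exists_countable_piSystem [MeasurableSpace.CountablyGenerated X] :
    ∃ A : Set (Set X), A.Countable ∧ IsPiSystem A ∧ mX = MeasurableSpace.generateFrom A :=
  ⟨generateSetAlgebra (MeasurableSpace.countableGeneratingSet X),
    countable_generateSetAlgebra MeasurableSpace.countable_countableGeneratingSet,
    fun _ hs _ ht _ => isSetAlgebra_generateSetAlgebra.inter_mem hs ht, by
      rw [generateFrom_generateSetAlgebra_eq, MeasurableSpace.generateFrom_countableGeneratingSet]⟩

/-- Only countably many of the functions `e ↦ μe e s` matter: they generate a countably generated
σ-algebra on `E` for which `e ↦ μe e` is still measurable. -/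
lemma exists_small_sigma [MeasurableSpace.CountablyGenerated X] (μe : E → Measure X)
    [∀ e, IsProbabilityMeasure (μe e)]
    (hm : ∀ s : Set X, MeasurableSet s → Measurable fun e => μe e s) :
    ∃ m' : MeasurableSpace E, m' ≤ mE ∧ @MeasurableSpace.CountablyGenerated E m' ∧
      Measurable[m'] μe := by
  obtain ⟨A, hAc, hAπ, hA⟩ := exists_countable_piSystem (X := X)
  have : Countable A := hAc.to_subtype
  have hAm : ∀ s : A, MeasurableSet (s : Set X) := fun s => by
    rw [hA]; exact MeasurableSpace.measurableSet_generateFrom s.2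
  let G : E → A → ENNReal := fun e s => μe e s
  have hG : Measurable G := measurable_pi_lambda _ fun s => hm _ (hAm s)
  refine ⟨MeasurableSpace.comap G inferInstance, hG.comap_le,
    MeasurableSpace.CountablyGenerated.comap G, ?_⟩
  refine @Measurable.measure_of_isPiSystem_of_isProbabilityMeasure E X
    (MeasurableSpace.comap G inferInstance) _ μe _ A hA hAπ fun s hs => ?_
  exact (measurable_pi_apply (⟨s, hs⟩ : A)).comp (comap_measurable G)

lemma ae_measurePreserving [MeasurableSpace.CountablyGenerated X] {η : Measure E}
    {κ : Kernel E X} [IsMarkovKernel κ] {T : X → X} (hTm : Measurable T)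
    (h : ∀ s : Set X, MeasurableSet s → ∀ᵐ e ∂η, κ e (T ⁻¹' s) = κ e s) :
    ∀ᵐ e ∂η, MeasurePreserving T (κ e) (κ e) := by
  obtain ⟨A, hAc, hAπ, hA⟩ := exists_countable_piSystem (X := X)
  have hAm : ∀ s ∈ A, MeasurableSet s := fun s hs => by
    rw [hA]; exact MeasurableSpace.measurableSet_generateFrom hs
  have h' := (ae_ball_iff hAc).2 fun s hs => h s (hAm s hs)
  filter_upwards [h'] with e he
  refine ⟨hTm, (ext_of_generate_finite A hA hAπ (fun s hs => ?_) ?_).symm⟩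
  · rw [Measure.map_apply hTm (hAm s hs), he s hs]
  · rw [Measure.map_apply hTm MeasurableSet.univ, preimage_univ]

/-- The integral formula for an arbitrary parameter space and invariant fibre measures. -/
lemma hPartCond_eq_integral_of_invariant {E X : Type*} {C : MeasurableSpace X}
    [mE : MeasurableSpace E] [mX : MeasurableSpace X]
    [MeasurableSpace.CountablyGenerated X] {η : Measure E} [IsProbabilityMeasure η]
    {μe : E → Measure X} (hμeprob : ∀ e, IsProbabilityMeasure (μe e)) {μ : Measure X}
    [IsProbabilityMeasure μ] {T : X → X} (hT : MeasurePreserving T μ μ)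
    (hμeinv : ∀ᵐ e ∂η, MeasurePreserving T (μe e) (μe e))
    (hμemeas : ∀ s : Set X, MeasurableSet s → Measurable fun e => μe e s)
    (hdisint : ∀ s : Set X, MeasurableSet s → μ s = ∫⁻ e, μe e s ∂η)
    (hC : C ≤ mX) (hCG : @MeasurableSpace.CountablyGenerated X C) (hTC : C.comap T ≤ C)
    {ι : Type*} [Fintype ι] {α : ι → Set X} (hα : ∀ i, MeasurableSet (α i)) (pα : IsPart α) :
    hPartCond μ T α C = ∫ e, hPartCond (μe e) T α C ∂η := by
  obtain ⟨m', hm', hcg, hmeas⟩ := exists_small_sigma μe hμemeas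
  let κ : @Kernel E X m' mX := @Kernel.mk E X m' mX μe hmeas
  have hκ : @IsMarkovKernel E X m' mX κ := @IsMarkovKernel.mk E X m' mX κ hμeprob
  have hev : ∀ s : Set X, MeasurableSet s → Measurable[m'] fun e => μe e s := fun s hs =>
    (Measure.measurable_coe hs).comp hmeas
  have hη : IsProbabilityMeasure (η.trim hm') := 
    ⟨by rw [trim_measurableSet_eq hm' MeasurableSet.univ]; exact measure_univ⟩
  have hinv : ∀ᵐ e ∂(η.trim hm'), MeasurePreserving T (κ e) (κ e) := by
    refine @ae_measurePreserving E X m' mX _ (η.trim hm') κ hκ T hT.measurable fun s hs => ?_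
    refine ae_eq_trim_of_measurable hm' (hev _ (hT.measurable hs)) (hev s hs) ?_
    filter_upwards [hμeinv] with e he
    exact he.measure_preimage hs.nullMeasurableSet
  have hdis : ∀ s : Set X, MeasurableSet s → μ s = ∫⁻ e, κ e s ∂(η.trim hm') := fun s hs => by
    rw [hdisint s hs]
    exact (lintegral_trim hm' (hev s hs)).symm
  have key := @hPartCond_eq_integral E X C m' mX hcg (η.trim hm') hη κ hκ μ _ T hT hinv hdis hC
    hCG hTC _ _ α hα pα
  rw [key]
  exact (integral_trim hm' (@measurable_hPartCond E X C m' mX κ hκ T hT.measurable hC hCG _ _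
    α hα).stronglyMeasurable).symm

end Reduction

/-- **Lemma (ergodic decomposition of conditional entropy for a partition).**
Let `(X,B,μ,T)` be an invertible Lebesgue system, `μ = ∫_E μ_e dη(e)` its ergodic
decomposition, and `C` a countably generated sub-σ-algebra of `B` with `T⁻¹C ⊆ C`.
Then for every finite measurable partition `α` of `X`,
`h_μ(T, α | C) = ∫_E h_{μ_e}(T, α | C) dη(e)`. -/
theorem ergodic_decomposition_conditional_entropy
    {X E : Type*}
    [mX : MeasurableSpace X] [StandardBorelSpace X] [mE : MeasurableSpace E]
    (μ : Measure X) [IsProbabilityMeasure μ]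
    (T : X → X) (hTbij : Function.Bijective T) (hT : MeasurePreserving T μ μ)
    (η : Measure E) [IsProbabilityMeasure η]
    (μe : E → Measure X) (hμeprob : ∀ e, IsProbabilityMeasure (μe e))
    (hμeerg : ∀ᵐ e ∂η, Ergodic T (μe e))
    (hμemeas : ∀ s : Set X, MeasurableSet[mX] s → Measurable fun e => μe e s)
    (hdisint : ∀ s : Set X, MeasurableSet[mX] s → μ s = ∫⁻ e, μe e s ∂η)
    (C : MeasurableSpace X) (hC : C ≤ mX)
    (hCgen : ∃ S : Set (Set X), S.Countable ∧ C = MeasurableSpace.generateFrom S)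
    (hTC : MeasurableSpace.comap T C ≤ C)
    (α : FinPart X mX) :
    hPartCond μ T α.atom C = ∫ e, hPartCond (μe e) T α.atom C ∂η := by
  have pα : IsPart α.atom := by
    intro x
    obtain ⟨i, hi⟩ := mem_iUnion.1 (α.cover.symm ▸ mem_univ x)
    refine ⟨i, hi, fun j hj => ?_⟩
    by_contra hne
    exact disjoint_left.1 (α.disj j i hne) hj hi
  exact @hPartCond_eq_integral_of_invariant E X C mE mX _ η _ μe hμeprob μ _ T hT
    (hμeerg.mono fun e he => he.toMeasurePreserving) hμemeas hdisint hC ⟨hCgen⟩ hTC _ _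
    α.atom α.meas pα
end

section
/- (Ergodic decomposition of entropy for a partition) Let (X,B,μ,T) be an invertible Lebesgue system and μ = ∫_E μ_e dη(e) its ergodic decomposition. Then for every finite measurable partition α of X, h_μ(T,α) = ∫_E h_{μ_e}(T,α) dη(e). -/
/-! The proof shows that `ν ↦ h_ν(T, α)` is affine along every measurable mixture of invariant
measures, following the classical argument of Jacobs. Write `H_ν(n)` for the entropy of
`⋁_{i<n} T^{-i} α`; it is subadditive in `n` when `ν` is invariant, so `H_ν(n) / n` tends to
`h_ν(T, α)` (`tendsto_hPart`). As `H_{μ_e}(n) / n` is also bounded uniformly in `n` and `e`, the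
integrals `∫ H_{μ_e}(n) / n dη` tend to `∫ h_{μ_e}(T, α) dη` by dominated convergence.

The inequality `≥` is concavity of entropy (`integral_plainH_le`).

For `≤`, it suffices that `n h_μ(T, α) ≤ ∫ H_{μ_e}(n) dη` for each fixed `n`
(`mul_hPart_bind_le`). Split `E` into finitely many cells on which the vector of masses of the
atoms of `⋁_{i<n} T^{-i} α` is almost constant, and let `ν_j` be the normalized mixture over the
`j`-th cell, of weight `w_j`. For every `N`, up to a constant depending only on the weights,
`H_μ(N n) ≤ ∑ w_j H_{ν_j}(N n)` (`plainH_bind_le`). This is at most `N ∑ w_j H_{ν_j}(n)`, since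
`ν_j` is invariant, and `∑ w_j H_{ν_j}(n)` is close to `∫ H_{μ_e}(n) dη` by uniform continuity of
`t ↦ -t log t` on `[0, 1]` (`real_mul_plainH_cond_le`). Dividing by `N` and letting `N → ∞` gives
the claim. -/

open MeasureTheory Filter Set Topology

/-! ### Entropy of finite probability vectors -/

/-- Subadditivity of `t ↦ -t log t` over finite sums of nonnegative reals. -/
lemma negMulLog_sum_le {J : Type*} (s : Finset J) (x : J → ℝ) (hx : ∀ j, 0 ≤ x j) :
    Real.negMulLog (∑ j ∈ s, x j) ≤ ∑ j ∈ s, Real.negMulLog (x j) := by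
  have key : ∀ j ∈ s, -(x j * Real.log (∑ i ∈ s, x i)) ≤ Real.negMulLog (x j) := by
    intro j hj
    rcases (hx j).eq_or_lt with h | h
    · simp [← h]
    · have hle : x j ≤ ∑ i ∈ s, x i := Finset.single_le_sum (fun i _ => hx i) hj
      have := mul_le_mul_of_nonneg_left (Real.log_le_log h hle) h.le
      simp only [Real.negMulLog]
      linarith
  calc Real.negMulLog (∑ j ∈ s, x j) = ∑ j ∈ s, -(x j * Real.log (∑ i ∈ s, x i)) := by
        rw [Finset.sum_neg_distrib, ← Finset.sum_mul, Real.negMulLog]; ring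
    _ ≤ _ := Finset.sum_le_sum key

/-- The entropy of a joint distribution `p` is at most the sum of the entropies of its
marginals. -/
lemma sum_negMulLog_joint_le {I J : Type*} [Fintype I] [Fintype J] (p : I → J → ℝ)
    (hp : ∀ i j, 0 ≤ p i j) (h1 : ∑ i, ∑ j, p i j = 1) :
    ∑ i, ∑ j, Real.negMulLog (p i j) ≤
      ∑ i, Real.negMulLog (∑ j, p i j) + ∑ j, Real.negMulLog (∑ i, p i j) := by
  set a : I → ℝ := fun i => ∑ j, p i j with ha
  set b : J → ℝ := fun j => ∑ i, p i j with hb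
  have hb1 : ∑ j, b j = 1 := by rw [hb, Finset.sum_comm]; exact h1
  -- Termwise form of the nonnegativity of relative entropy, from `log t ≤ t - 1`.
  have key : ∀ i j, Real.negMulLog (p i j) ≤
      -(p i j * Real.log (a i)) + -(p i j * Real.log (b j)) + (a i * b j - p i j) := by
    intro i j
    have hai : p i j ≤ a i := Finset.single_le_sum (fun j _ => hp i j) (Finset.mem_univ j)
    have hbj : p i j ≤ b j :=
      Finset.single_le_sum (f := fun i => p i j) (fun i _ => hp i j) (Finset.mem_univ i)
    rcases (hp i j).eq_or_lt with h | h
    · have := mul_nonneg ((hp i j).trans hai) ((hp i j).trans hbj)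
      simpa [← h] using this
    · have ha0 : 0 < a i := h.trans_le hai
      have hb0 : 0 < b j := h.trans_le hbj
      have h2 := Real.log_le_sub_one_of_pos (div_pos (mul_pos ha0 hb0) h)
      rw [Real.log_div (mul_pos ha0 hb0).ne' h.ne', Real.log_mul ha0.ne' hb0.ne'] at h2
      have h3 := mul_le_mul_of_nonneg_left h2 h.le
      have h4 : p i j * (a i * b j / p i j - 1) = a i * b j - p i j := by field_simp
      rw [h4] at h3
      simp only [Real.negMulLog]
      linarith
  calc ∑ i, ∑ j, Real.negMulLog (p i j)
      ≤ ∑ i, ∑ j, (-(p i j * Real.log (a i)) + -(p i j * Real.log (b j)) +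
          (a i * b j - p i j)) :=
        Finset.sum_le_sum fun i _ => Finset.sum_le_sum fun j _ => key i j
    _ = _ := by
        simp only [Finset.sum_add_distrib, Finset.sum_sub_distrib, Finset.sum_neg_distrib]
        have e1 : ∑ i, ∑ j, p i j * Real.log (a i) = -∑ i, Real.negMulLog (a i) := by
          rw [← Finset.sum_neg_distrib]
          refine Finset.sum_congr rfl fun i _ => ?_
          rw [← Finset.sum_mul, Real.negMulLog]; ring
        have e2 : ∑ i, ∑ j, p i j * Real.log (b j) = -∑ j, Real.negMulLog (b j) := by
          rw [← Finset.sum_neg_distrib, Finset.sum_comm]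
          refine Finset.sum_congr rfl fun j _ => ?_
          rw [← Finset.sum_mul, Real.negMulLog]; ring
        have e3 : ∑ i, ∑ j, a i * b j = 1 := by
          rw [← Finset.sum_mul_sum, hb1, mul_one]; exact h1
        rw [e1, e2, e3, h1]; ring

/-! ### Dynamical joins of a finite partition -/

section Joins

variable {X : Type*} [mX : MeasurableSpace X]

lemma measurableSet_joinAtoms_s19 {T : X → X} (hT : Measurable T) (α : FinPart X mX) (n : ℕ)
    (s : Fin n → Fin α.k) : MeasurableSet (joinAtoms T α.atom n s) :=
  MeasurableSet.iInter fun i => (hT.iterate i) (α.meas (s i))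

lemma disjoint_joinAtoms (T : X → X) (α : FinPart X mX) (n : ℕ) :
    Pairwise (Function.onFun Disjoint (joinAtoms T α.atom n)) := by
  intro s t hst
  obtain ⟨i, hi⟩ := Function.ne_iff.1 hst
  refine Set.disjoint_left.2 fun x hx hy => ?_
  exact Set.disjoint_left.1 (α.disj _ _ hi) (Set.mem_iInter.1 hx i) (Set.mem_iInter.1 hy i)

lemma iUnion_joinAtoms (T : X → X) (α : FinPart X mX) (n : ℕ) :
    ⋃ s, joinAtoms T α.atom n s = Set.univ := by
  refine Set.eq_univ_of_forall fun x => ?_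
  have h : ∀ y, ∃ j, y ∈ α.atom j := fun y => by
    have : y ∈ ⋃ i, α.atom i := by rw [α.cover]; trivial
    simpa using this
  choose c hc using h
  exact Set.mem_iUnion.2 ⟨fun i => c (T^[i] x), Set.mem_iInter.2 fun i => hc _⟩

lemma joinAtoms_append_s19 (T : X → X) (α : FinPart X mX) (m n : ℕ) (s : Fin m → Fin α.k)
    (t : Fin n → Fin α.k) :
    joinAtoms T α.atom (m + n) (Fin.append s t) =
      joinAtoms T α.atom m s ∩ T^[m] ⁻¹' joinAtoms T α.atom n t := by
  ext x
  simp only [joinAtoms, Set.mem_iInter, Set.mem_preimage, Set.mem_inter_iff]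
  rw [Fin.forall_fin_add]
  simp [← Function.iterate_add_apply, add_comm]

lemma sum_measureReal_inter {ν : Measure X} [IsFiniteMeasure ν] {T : X → X} (hT : Measurable T)
    (α : FinPart X mX) (n : ℕ) {S : X → X} (hS : Measurable S) {A : Set X}
    (hA : MeasurableSet A) :
    ∑ s, ν.real (A ∩ S ⁻¹' joinAtoms T α.atom n s) = ν.real A := by
  rw [← measureReal_iUnion_fintype, ← Set.inter_iUnion, ← Set.preimage_iUnion,
    iUnion_joinAtoms, Set.preimage_univ, Set.inter_univ]
  · intro s t hst
    exact ((disjoint_joinAtoms T α n hst).preimage S).mono Set.inter_subset_right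
      Set.inter_subset_right
  · exact fun s => hA.inter (hS (measurableSet_joinAtoms_s19 hT α n s))

lemma sum_measureReal_joinAtoms {ν : Measure X} [IsFiniteMeasure ν] {T : X → X}
    (hT : Measurable T) (α : FinPart X mX) (n : ℕ) :
    ∑ s, ν.real (joinAtoms T α.atom n s) = ν.real Set.univ := by
  have := sum_measureReal_inter (ν := ν) hT α n measurable_id MeasurableSet.univ
  simpa using this

/-- Subadditivity of `n ↦ H_ν(⋁_{i<n} T^{-i} α)` for an invariant measure `ν`. -/
lemma subadditive_plainH {ν : Measure X} [IsProbabilityMeasure ν] {T : X → X}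
    (hT : MeasurePreserving T ν ν) (α : FinPart X mX) :
    Subadditive fun n => plainH ν (joinAtoms T α.atom n) := by
  intro m n
  have hTm := hT.measurable
  have row : ∀ s, ∑ t, ν.real (joinAtoms T α.atom (m + n) (Fin.append s t)) =
      ν.real (joinAtoms T α.atom m s) := fun s => by
    simp only [joinAtoms_append_s19]
    exact sum_measureReal_inter hTm α n (hTm.iterate m) (measurableSet_joinAtoms_s19 hTm α m s)
  have col : ∀ t, ∑ s, ν.real (joinAtoms T α.atom (m + n) (Fin.append s t)) =
      ν.real (joinAtoms T α.atom n t) := fun t => by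
    have hA := measurableSet_joinAtoms_s19 hTm α n t
    have := sum_measureReal_inter (ν := ν) hTm α m measurable_id ((hTm.iterate m) hA)
    rw [(hT.iterate m).measureReal_preimage hA.nullMeasurableSet] at this
    simpa only [joinAtoms_append_s19, Set.inter_comm, Set.preimage_id] using this
  have h := sum_negMulLog_joint_le
    (fun s t => ν.real (joinAtoms T α.atom (m + n) (Fin.append s t)))
    (fun _ _ => measureReal_nonneg) (by
      simp only [row, sum_measureReal_joinAtoms hTm α m, probReal_univ])
  simp only [row, col] at h
  refine le_trans (le_of_eq ?_) h
  simp only [plainH]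
  rw [← Fintype.sum_prod_type'
    (fun s t => Real.negMulLog (ν.real (joinAtoms T α.atom (m + n) (Fin.append s t))))]
  exact (Fintype.sum_equiv (Fin.appendEquiv m n) _ _ fun _ => rfl).symm

lemma plainH_nonneg (ν : Measure X) [IsProbabilityMeasure ν] {ι : Type*} [Fintype ι]
    (β : ι → Set X) : 0 ≤ plainH ν β :=
  Finset.sum_nonneg fun _ _ => Real.negMulLog_nonneg measureReal_nonneg measureReal_le_one

lemma plainH_le_card (ν : Measure X) [IsProbabilityMeasure ν] {ι : Type*} [Fintype ι]
    (β : ι → Set X) : plainH ν β ≤ Fintype.card ι := by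
  have h : plainH ν β ≤ ∑ _i : ι, (1 : ℝ) := Finset.sum_le_sum fun i _ => by
    have h1 := Real.negMulLog_le_one_sub_self (measureReal_nonneg (μ := ν) (s := β i))
    have h2 := measureReal_nonneg (μ := ν) (s := β i)
    exact h1.trans (by linarith)
  simpa using h

lemma plainH_join_mul_le {ν : Measure X} [IsProbabilityMeasure ν] {T : X → X}
    (hT : MeasurePreserving T ν ν) (α : FinPart X mX) (N n : ℕ) :
    plainH ν (joinAtoms T α.atom (N * n)) ≤ N * plainH ν (joinAtoms T α.atom n) := by
  have h0 : plainH ν (joinAtoms T α.atom 0) = 0 := by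
    simp [plainH, joinAtoms]
  have := (subadditive_plainH hT α).apply_mul_add_le N n 0
  simpa [h0] using this

lemma mul_hPart_le (ν : Measure X) [IsProbabilityMeasure ν] (T : X → X)
    (α : FinPart X mX) (n : ℕ) :
    n * hPart ν T α.atom ≤ plainH ν (joinAtoms T α.atom n) := by
  rcases n with _ | n
  · simpa using plainH_nonneg ν (joinAtoms T α.atom 0)
  have h : hPart ν T α.atom ≤ (1 / (n + 1 : ℝ)) * plainH ν (joinAtoms T α.atom (n + 1)) := by
    refine ciInf_le ⟨0, ?_⟩ n
    rintro _ ⟨m, rfl⟩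
    exact mul_nonneg (by positivity) (plainH_nonneg ν _)
  rw [one_div, ← div_eq_inv_mul, le_div_iff₀ (by positivity)] at h
  push_cast
  linarith

/-- The infimum defining `hPart` is a limit when the measure is invariant (Fekete's lemma). -/
lemma tendsto_hPart {ν : Measure X} [IsProbabilityMeasure ν] {T : X → X}
    (hT : MeasurePreserving T ν ν) (α : FinPart X mX) :
    Tendsto (fun n : ℕ => plainH ν (joinAtoms T α.atom n) / n) atTop
      (𝓝 (hPart ν T α.atom)) := by
  have hs := subadditive_plainH hT α
  have h := hs.tendsto_lim ⟨0, by
    rintro _ ⟨m, rfl⟩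
    exact div_nonneg (plainH_nonneg ν _) (Nat.cast_nonneg m)⟩
  convert h using 2
  rw [Subadditive.lim, hPart, iInf]
  congr 1
  ext y
  constructor
  · rintro ⟨n, rfl⟩
    exact ⟨n + 1, by simp, by simp [div_eq_inv_mul]⟩
  · rintro ⟨n, hn, rfl⟩
    obtain ⟨m, rfl⟩ : ∃ m, n = m + 1 := ⟨n - 1, by simp at hn; omega⟩
    exact ⟨m, by simp [div_eq_inv_mul]⟩

end Joins

/-! ### Mixtures of measures -/

section Mixtures

variable {X E : Type*} [mX : MeasurableSpace X] [mE : MeasurableSpace E]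

lemma measurable_measureReal {μe : E → Measure X} (hm : Measurable μe) {A : Set X}
    (hA : MeasurableSet A) : Measurable fun e => (μe e).real A :=
  ((Measure.measurable_coe hA).comp hm).ennreal_toReal

lemma integrable_measureReal {μe : E → Measure X} (hm : Measurable μe)
    (hp : ∀ e, IsProbabilityMeasure (μe e)) (η : Measure E) [IsFiniteMeasure η] {A : Set X}
    (hA : MeasurableSet A) : Integrable (fun e => (μe e).real A) η := by
  refine Integrable.of_bound (measurable_measureReal hm hA).aestronglyMeasurable 1
    (ae_of_all _ fun e => ?_)
  have := hp e
  rw [Real.norm_of_nonneg measureReal_nonneg]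
  exact measureReal_le_one

lemma measureReal_bind {μe : E → Measure X} (hm : Measurable μe)
    (hp : ∀ e, IsProbabilityMeasure (μe e)) (η : Measure E) {A : Set X}
    (hA : MeasurableSet A) : (η.bind μe).real A = ∫ e, (μe e).real A ∂η := by
  rw [measureReal_def, Measure.bind_apply hA hm.aemeasurable, ← integral_toReal]
  · rfl
  · exact ((Measure.measurable_coe hA).comp hm).aemeasurable
  · exact ae_of_all _ fun e => by have := hp e; exact measure_lt_top _ _

lemma measurePreserving_bind {μe : E → Measure X} (hm : Measurable μe) {η : Measure E}
    {T : X → X} (hTm : Measurable T) (hT : ∀ᵐ e ∂η, MeasurePreserving T (μe e) (μe e)) :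
    MeasurePreserving T (η.bind μe) (η.bind μe) := by
  refine ⟨hTm, Measure.ext fun A hA => ?_⟩
  rw [Measure.map_apply hTm hA, Measure.bind_apply (hTm hA) hm.aemeasurable,
    Measure.bind_apply hA hm.aemeasurable]
  refine lintegral_congr_ae ?_
  filter_upwards [hT] with e he using he.measure_preimage hA.nullMeasurableSet

lemma measurable_plainH {μe : E → Measure X} (hm : Measurable μe) {ι : Type*} [Fintype ι]
    {β : ι → Set X} (hβ : ∀ i, MeasurableSet (β i)) : Measurable fun e => plainH (μe e) β :=
  Finset.measurable_fun_sum _ fun i _ =>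
    Real.continuous_negMulLog.measurable.comp (measurable_measureReal hm (hβ i))

lemma integrable_plainH {μe : E → Measure X} (hm : Measurable μe)
    (hp : ∀ e, IsProbabilityMeasure (μe e)) (η : Measure E) [IsFiniteMeasure η]
    {ι : Type*} [Fintype ι] {β : ι → Set X} (hβ : ∀ i, MeasurableSet (β i)) :
    Integrable (fun e => plainH (μe e) β) η := by
  refine Integrable.of_bound (measurable_plainH hm hβ).aestronglyMeasurable (Fintype.card ι)
    (ae_of_all _ fun e => ?_)
  have := hp e
  rw [Real.norm_of_nonneg (plainH_nonneg _ _)]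
  exact plainH_le_card _ _

/-- Concavity of entropy in the measure (Jensen's inequality). -/
lemma integral_plainH_le {μe : E → Measure X} (hm : Measurable μe)
    (hp : ∀ e, IsProbabilityMeasure (μe e)) (η : Measure E) [IsProbabilityMeasure η]
    {ι : Type*} [Fintype ι] {β : ι → Set X} (hβ : ∀ i, MeasurableSet (β i)) :
    ∫ e, plainH (μe e) β ∂η ≤ plainH (η.bind μe) β := by
  have hi : ∀ i, Integrable (fun e => Real.negMulLog ((μe e).real (β i))) η := fun i => by
    simpa [plainH, measureReal_def] using
      integrable_plainH hm hp η (β := fun _ : Unit => β i) (fun _ => hβ i)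
  have : ∫ e, plainH (μe e) β ∂η = ∑ i, ∫ e, Real.negMulLog ((μe e).real (β i)) ∂η :=
    integral_finsetSum _ fun i _ => hi i
  rw [this]
  refine Finset.sum_le_sum fun i _ => ?_
  have h := Real.concaveOn_negMulLog.le_map_integral (μ := η)
    Real.continuous_negMulLog.continuousOn isClosed_Ici
    (ae_of_all _ fun e => measureReal_nonneg (μ := μe e) (s := β i))
    (integrable_measureReal hm hp η (hβ i)) (hi i)
  rwa [← measureReal_bind hm hp η (hβ i)] at h

lemma integral_eq_sum_fibers {J : Type*} [Fintype J] [MeasurableSpace J]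
    [MeasurableSingletonClass J] {c : E → J} (hc : Measurable c) (η : Measure E) {f : E → ℝ}
    (hf : Integrable f η) : ∫ e, f e ∂η = ∑ j, ∫ e in c ⁻¹' {j}, f e ∂η := by
  rw [← integral_iUnion_fintype (fun j => hc (measurableSet_singleton j)) ?_
    fun j => hf.integrableOn]
  · rw [← Set.preimage_iUnion, Set.iUnion_of_singleton, Set.preimage_univ,
      setIntegral_univ]
  · intro i j hij
    exact (Set.disjoint_singleton.2 hij).preimage c

lemma real_mul_integral_cond (η : Measure E) [IsProbabilityMeasure η] (D : Set E) (f : E → ℝ) :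
    η.real D * ∫ e, f e ∂(ProbabilityTheory.cond η D) = ∫ e in D, f e ∂η := by
  rw [ProbabilityTheory.cond, integral_smul_measure, ENNReal.toReal_inv, ← measureReal_def,
    smul_eq_mul, ← mul_assoc]
  by_cases h : η.real D = 0
  · have : η D = 0 := (measureReal_eq_zero_iff).1 h
    rw [Measure.restrict_eq_zero.2 this]; simp
  · rw [mul_inv_cancel₀ h, one_mul]

/-- The entropy of a mixture exceeds the weighted average of the entropies of finitely many pieces
by at most the entropy of the weights; this error term does not depend on the partition `β`. -/
lemma plainH_bind_le {μe : E → Measure X} (hm : Measurable μe)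
    (hp : ∀ e, IsProbabilityMeasure (μe e)) (η : Measure E) [IsProbabilityMeasure η]
    {J : Type*} [Fintype J] [MeasurableSpace J] [MeasurableSingletonClass J] {c : E → J}
    (hc : Measurable c) {ι : Type*} [Fintype ι] {β : ι → Set X}
    (hβ : ∀ i, MeasurableSet (β i))
    (hβ1 : ∀ ν : Measure X, IsFiniteMeasure ν → ∑ i, ν.real (β i) = ν.real Set.univ) :
    plainH (η.bind μe) β ≤
      ∑ j, η.real (c ⁻¹' {j}) *
        plainH ((ProbabilityTheory.cond η (c ⁻¹' {j})).bind μe) β +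
      ∑ j, Real.negMulLog (η.real (c ⁻¹' {j})) := by
  set w : J → ℝ := fun j => η.real (c ⁻¹' {j}) with hw
  set ν : J → Measure X := fun j => (ProbabilityTheory.cond η (c ⁻¹' {j})).bind μe with hν
  have hdec : ∀ i, (η.bind μe).real (β i) = ∑ j, w j * (ν j).real (β i) := fun i => by
    rw [measureReal_bind hm hp η (hβ i),
      integral_eq_sum_fibers hc η (integrable_measureReal hm hp η (hβ i))]
    refine Finset.sum_congr rfl fun j _ => ?_
    rw [hw, hν, measureReal_bind hm hp _ (hβ i), real_mul_integral_cond]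
  have hmass : ∀ j, (∑ i, (ν j).real (β i)) * Real.negMulLog (w j) = Real.negMulLog (w j) := by
    intro j
    by_cases h : w j = 0
    · simp [h]
    · have h' : η (c ⁻¹' {j}) ≠ 0 := fun h0 => h (by simp [hw, measureReal_def, h0])
      have := ProbabilityTheory.cond_isProbabilityMeasure h'
      have : IsProbabilityMeasure (ν j) :=
        isProbabilityMeasure_bind hm.aemeasurable (ae_of_all _ hp)
      rw [hβ1 (ν j) inferInstance, probReal_univ, one_mul]
  calc plainH (η.bind μe) β
      = ∑ i, Real.negMulLog (∑ j, w j * (ν j).real (β i)) :=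
        Finset.sum_congr rfl fun i _ => by rw [← hdec]; rfl
    _ ≤ ∑ i, ∑ j, Real.negMulLog (w j * (ν j).real (β i)) :=
        Finset.sum_le_sum fun i _ => negMulLog_sum_le _ _ fun j =>
          mul_nonneg measureReal_nonneg measureReal_nonneg
    _ = ∑ j, ∑ i, ((ν j).real (β i) * Real.negMulLog (w j) +
          w j * Real.negMulLog ((ν j).real (β i))) := by
        rw [Finset.sum_comm]; simp only [Real.negMulLog_mul]
    _ = ∑ j, (Real.negMulLog (w j) + w j * plainH (ν j) β) := by
        refine Finset.sum_congr rfl fun j _ => ?_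
        rw [Finset.sum_add_distrib, ← Finset.sum_mul, hmass, ← Finset.mul_sum]; rfl
    _ = _ := by rw [Finset.sum_add_distrib, add_comm]

/-- The parameter space splits into finitely many measurable cells on which all the masses
`μe e (β i)` oscillate by at most `ε`. -/
lemma exists_finite_coding {μe : E → Measure X} (hm : Measurable μe)
    (hp : ∀ e, IsProbabilityMeasure (μe e)) {ι : Type*} [Fintype ι] {β : ι → Set X}
    (hβ : ∀ i, MeasurableSet (β i)) {ε : ℝ} (hε : 0 < ε) :
    ∃ (M : ℕ) (c : E → ι → Fin (M + 1)), Measurable c ∧ ∀ e e', c e = c e' →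
      ∀ i, |(μe e).real (β i) - (μe e').real (β i)| ≤ ε := by
  obtain ⟨M, hM⟩ := exists_nat_gt (1 / ε)
  have hM0 : (0 : ℝ) < M := (by positivity : 0 < 1 / ε).trans hM
  refine ⟨M, fun e i => Fin.ofNat (M + 1) ⌊M * (μe e).real (β i)⌋₊, ?_, ?_⟩
  · refine measurable_pi_lambda _ fun i => ?_
    exact (Measurable.of_discrete (f := fun n : ℕ => Fin.ofNat (M + 1) n)).comp
      (((measurable_measureReal hm (hβ i)).const_mul _).nat_floor)
  · intro e e' h i
    have hlt : ∀ e, ⌊M * (μe e).real (β i)⌋₊ < M + 1 := fun e => by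
      have := hp e
      rw [Nat.floor_lt (mul_nonneg hM0.le measureReal_nonneg)]
      have h1 : (μe e).real (β i) ≤ 1 := measureReal_le_one
      push_cast
      nlinarith
    have h1 := congrArg Fin.val (congrFun h i)
    simp only [Fin.val_ofNat, Nat.mod_eq_of_lt (hlt _)] at h1
    have a1 := Nat.floor_le (mul_nonneg hM0.le (measureReal_nonneg (μ := μe e) (s := β i)))
    have a2 := Nat.lt_floor_add_one (M * (μe e).real (β i))
    have b1 := Nat.floor_le (mul_nonneg hM0.le (measureReal_nonneg (μ := μe e') (s := β i)))
    have b2 := Nat.lt_floor_add_one (M * (μe e').real (β i))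
    rw [h1] at a1 a2
    have h2 : |M * ((μe e).real (β i) - (μe e').real (β i))| ≤ 1 := by
      rw [mul_sub, abs_le]; constructor <;> linarith
    rw [abs_mul, abs_of_pos hM0] at h2
    rw [div_lt_iff₀ hε] at hM
    exact le_of_mul_le_mul_left (h2.trans hM.le) hM0

/-- Entropy depends uniformly continuously on the masses of the atoms. -/
lemma exists_plainH_close (X : Type*) [MeasurableSpace X] (ι : Type*) [Fintype ι] {δ : ℝ}
    (hδ : 0 < δ) : ∃ ε > 0, ∀ (β : ι → Set X) (ν ν' : Measure X), IsProbabilityMeasure ν →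
      IsProbabilityMeasure ν' → (∀ i, |ν.real (β i) - ν'.real (β i)| ≤ ε) →
      plainH ν β ≤ plainH ν' β + δ := by
  have huc := (isCompact_Icc (a := (0 : ℝ)) (b := 1)).uniformContinuousOn_of_continuous
    Real.continuous_negMulLog.continuousOn
  rw [Metric.uniformContinuousOn_iff] at huc
  obtain ⟨ε, hε, h⟩ := huc (δ / (Fintype.card ι + 1)) (by positivity)
  refine ⟨ε / 2, by positivity, fun β ν ν' _ _ hc => ?_⟩
  have hterm : ∀ i, Real.negMulLog (ν.real (β i)) ≤
      Real.negMulLog (ν'.real (β i)) + δ / (Fintype.card ι + 1) := fun i => by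
    have := h (ν.real (β i)) ⟨measureReal_nonneg, measureReal_le_one⟩ (ν'.real (β i))
      ⟨measureReal_nonneg, measureReal_le_one⟩
      (by rw [Real.dist_eq]; exact (hc i).trans_lt (by linarith))
    rw [Real.dist_eq] at this
    linarith [(abs_lt.1 this).2]
  calc plainH ν β ≤ ∑ i, (Real.negMulLog (ν'.real (β i)) + δ / (Fintype.card ι + 1)) :=
        Finset.sum_le_sum fun i _ => hterm i
    _ = plainH ν' β + Fintype.card ι * (δ / (Fintype.card ι + 1)) := by
        rw [Finset.sum_add_distrib]; simp [plainH, measureReal_def]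
    _ ≤ plainH ν' β + δ := by
        gcongr
        rw [mul_div_assoc', div_le_iff₀ (by positivity)]
        nlinarith

/-- If the masses of the atoms of `β` oscillate by at most `ε` on a cell `D`, then the entropy of
the normalized mixture over `D` is at most the average of the entropies over `D`, up to `δ`. -/
lemma real_mul_plainH_cond_le {μe : E → Measure X} (hm : Measurable μe)
    (hp : ∀ e, IsProbabilityMeasure (μe e)) (η : Measure E) [IsProbabilityMeasure η]
    {ι : Type*} [Fintype ι] {β : ι → Set X} (hβ : ∀ i, MeasurableSet (β i)) {ε δ : ℝ}
    (hclose : ∀ (ν ν' : Measure X), IsProbabilityMeasure ν →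
      IsProbabilityMeasure ν' → (∀ i, |ν.real (β i) - ν'.real (β i)| ≤ ε) →
      plainH ν β ≤ plainH ν' β + δ) {D : Set E} (hD : MeasurableSet D)
    (hosc : ∀ e ∈ D, ∀ e' ∈ D, ∀ i, |(μe e).real (β i) - (μe e').real (β i)| ≤ ε) :
    η.real D * plainH ((ProbabilityTheory.cond η D).bind μe) β ≤
      ∫ e in D, (plainH (μe e) β + δ) ∂η := by
  by_cases h0 : η D = 0
  · rw [Measure.restrict_eq_zero.2 h0]; simp [measureReal_def, h0]
  have := ProbabilityTheory.cond_isProbabilityMeasure h0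
  have : IsProbabilityMeasure ((ProbabilityTheory.cond η D).bind μe) :=
    isProbabilityMeasure_bind hm.aemeasurable (ae_of_all _ hp)
  have hpt : ∀ e ∈ D, plainH ((ProbabilityTheory.cond η D).bind μe) β ≤
      plainH (μe e) β + δ := by
    intro e he
    refine hclose _ _ this (hp e) fun i => ?_
    have hsub : ((ProbabilityTheory.cond η D).bind μe).real (β i) - (μe e).real (β i) =
        ∫ e', ((μe e').real (β i) - (μe e).real (β i)) ∂(ProbabilityTheory.cond η D) := by
      rw [integral_sub (integrable_measureReal hm hp _ (hβ i)) (integrable_const _),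
        measureReal_bind hm hp _ (hβ i)]
      simp
    rw [hsub, ← Real.norm_eq_abs]
    have := norm_integral_le_of_norm_le_const (μ := ProbabilityTheory.cond η D)
      (f := fun e' => (μe e').real (β i) - (μe e).real (β i)) (C := ε) (by
        filter_upwards [ProbabilityTheory.ae_cond_mem hD] with e' he'
        exact hosc e' he' e he i)
    simpa using this
  calc η.real D * plainH ((ProbabilityTheory.cond η D).bind μe) β
      = ∫ _ in D, plainH ((ProbabilityTheory.cond η D).bind μe) β ∂η := by
        rw [setIntegral_const, smul_eq_mul]
    _ ≤ _ := setIntegral_mono_on (integrable_const _).integrableOn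
        ((integrable_plainH hm hp η hβ).add (integrable_const δ)).integrableOn hD hpt

lemma le_of_forall_nat_mul_le {a b C : ℝ} (h : ∀ N : ℕ, N * a ≤ N * b + C) : a ≤ b := by
  by_contra! hab
  obtain ⟨N, hN⟩ := exists_nat_gt (C / (a - b))
  rw [div_lt_iff₀ (by linarith)] at hN
  have := h N
  nlinarith

/-- The entropy of the mixture is bounded by the average entropy of each finite join. The cells
of a finite coding of `E` carry invariant measures, so their `N * n`-fold joins have entropy at
most `N` times that of their `n`-fold joins, while the cost of the coding is independent of
`N`. -/
lemma mul_hPart_bind_le {μe : E → Measure X} (hm : Measurable μe)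
    (hp : ∀ e, IsProbabilityMeasure (μe e)) (η : Measure E) [IsProbabilityMeasure η]
    {T : X → X} (hTm : Measurable T) (hT : ∀ᵐ e ∂η, MeasurePreserving T (μe e) (μe e))
    (α : FinPart X mX) (n : ℕ) :
    n * hPart (η.bind μe) T α.atom ≤ ∫ e, plainH (μe e) (joinAtoms T α.atom n) ∂η := by
  have : IsProbabilityMeasure (η.bind μe) :=
    isProbabilityMeasure_bind hm.aemeasurable (ae_of_all _ hp)
  have hβ := measurableSet_joinAtoms_s19 hTm α
  refine le_of_forall_pos_le_add fun δ hδ => ?_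
  obtain ⟨ε, hε, hclose⟩ := exists_plainH_close X (Fin n → Fin α.k) hδ
  obtain ⟨M, c, hc, hosc⟩ := exists_finite_coding hm hp (hβ n) hε
  have hint := integrable_plainH hm hp η (hβ n)
  have hcells : ∑ j, η.real (c ⁻¹' {j}) * plainH
      ((ProbabilityTheory.cond η (c ⁻¹' {j})).bind μe) (joinAtoms T α.atom n) ≤
      ∫ e, plainH (μe e) (joinAtoms T α.atom n) ∂η + δ := by
    have h1 : ∫ e, (plainH (μe e) (joinAtoms T α.atom n) + δ) ∂η =
        ∫ e, plainH (μe e) (joinAtoms T α.atom n) ∂η + δ := by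
      rw [integral_add hint (integrable_const _)]; simp
    rw [← h1, integral_eq_sum_fibers (f := fun e => plainH (μe e) (joinAtoms T α.atom n) + δ)
      hc η (hint.add (integrable_const δ))]
    refine Finset.sum_le_sum fun j _ => ?_
    refine real_mul_plainH_cond_le hm hp η (hβ n) (hclose _) (hc (measurableSet_singleton j)) ?_
    intro e he e' he' i
    exact hosc e e' (Eq.trans he (Eq.symm he')) i
  refine le_of_forall_nat_mul_le (C := ∑ j, Real.negMulLog (η.real (c ⁻¹' {j}))) fun N => ?_
  have h1 := mul_hPart_le (η.bind μe) T α (N * n)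
  have h2 := plainH_bind_le hm hp η hc (hβ (N * n))
    fun ν _ => sum_measureReal_joinAtoms hTm α (N * n)
  have h3 : ∑ j, η.real (c ⁻¹' {j}) * plainH
      ((ProbabilityTheory.cond η (c ⁻¹' {j})).bind μe) (joinAtoms T α.atom (N * n)) ≤
      N * ∑ j, η.real (c ⁻¹' {j}) * plainH
      ((ProbabilityTheory.cond η (c ⁻¹' {j})).bind μe) (joinAtoms T α.atom n) := by
    rw [Finset.mul_sum]
    refine Finset.sum_le_sum fun j _ => ?_
    by_cases h0 : η (c ⁻¹' {j}) = 0
    · simp [measureReal_def, h0]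
    have := ProbabilityTheory.cond_isProbabilityMeasure h0
    have : IsProbabilityMeasure ((ProbabilityTheory.cond η (c ⁻¹' {j})).bind μe) :=
      isProbabilityMeasure_bind hm.aemeasurable (ae_of_all _ hp)
    have hinv := measurePreserving_bind hm hTm
      (ProbabilityTheory.cond_absolutelyContinuous.ae_le hT :
        ∀ᵐ e ∂(ProbabilityTheory.cond η (c ⁻¹' {j})), MeasurePreserving T (μe e) (μe e))
    rw [mul_left_comm]
    exact mul_le_mul_of_nonneg_left (plainH_join_mul_le hinv α N n) measureReal_nonneg
  have h4 := mul_le_mul_of_nonneg_left hcells (Nat.cast_nonneg (α := ℝ) N)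
  push_cast at h1
  linarith

end Mixtures

/-- **Lemma (ergodic decomposition of entropy for a partition).**
Let `(X,B,μ,T)` be an invertible Lebesgue system and `μ = ∫_E μ_e dη(e)` its ergodic
decomposition. Then for every finite measurable partition `α` of `X`,
`h_μ(T, α) = ∫_E h_{μ_e}(T, α) dη(e)`. -/
theorem ergodic_decomposition_entropy_partition
    {X E : Type*}
    [mX : MeasurableSpace X] [StandardBorelSpace X] [mE : MeasurableSpace E]
    (μ : Measure X) [IsProbabilityMeasure μ]
    (T : X → X) (hTbij : Function.Bijective T) (hT : MeasurePreserving T μ μ)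
    (η : Measure E) [IsProbabilityMeasure η]
    (μe : E → Measure X) (hμeprob : ∀ e, IsProbabilityMeasure (μe e))
    (hμeerg : ∀ᵐ e ∂η, Ergodic T (μe e))
    (hμemeas : ∀ s : Set X, MeasurableSet[mX] s → Measurable fun e => μe e s)
    (hdisint : ∀ s : Set X, MeasurableSet[mX] s → μ s = ∫⁻ e, μe e s ∂η)
    (α : FinPart X mX) :
    hPart μ T α.atom = ∫ e, hPart (μe e) T α.atom ∂η := by
  have hm : Measurable μe := Measure.measurable_of_measurable_coe _ hμemeas
  have hTm := hT.measurable
  have hinv : ∀ᵐ e ∂η, MeasurePreserving T (μe e) (μe e) := by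
    filter_upwards [hμeerg] with e he using he.toMeasurePreserving
  have hμ : μ = η.bind μe := Measure.ext fun A hA => by
    rw [hdisint A hA, Measure.bind_apply hA hm.aemeasurable]
  have hβ := measurableSet_joinAtoms_s19 hTm α
  set u : ℕ → E → ℝ := fun n e => plainH (μe e) (joinAtoms T α.atom n) with hu
  have hlim : Tendsto (fun n : ℕ => ∫ e, u n e / n ∂η) atTop
      (𝓝 (∫ e, hPart (μe e) T α.atom ∂η)) := by
    refine tendsto_integral_of_dominated_convergence
      (fun _ => (Fintype.card (Fin 1 → Fin α.k) : ℝ))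
      (fun n => ((measurable_plainH hm (hβ n)).div_const _).aestronglyMeasurable)
      (integrable_const _) (fun n => ?_) ?_
    · filter_upwards [hinv] with e he
      have := hμeprob e
      rw [Real.norm_of_nonneg (div_nonneg (plainH_nonneg _ _) (Nat.cast_nonneg n))]
      refine div_le_of_le_mul₀ (Nat.cast_nonneg n) (Nat.cast_nonneg _) ?_
      have h1 := plainH_join_mul_le he α n 1
      have h2 := plainH_le_card (μe e) (joinAtoms T α.atom 1)
      rw [mul_one] at h1
      rw [mul_comm]
      exact h1.trans (mul_le_mul_of_nonneg_left h2 (Nat.cast_nonneg n))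
    · filter_upwards [hinv] with e he
      have := hμeprob e
      exact tendsto_hPart he α
  apply le_antisymm
  · refine ge_of_tendsto hlim ?_
    filter_upwards [eventually_gt_atTop 0] with n hn
    have h := mul_hPart_bind_le hm hμeprob η hTm hinv α n
    rw [← hμ] at h
    rw [integral_div, le_div_iff₀ (Nat.cast_pos.2 hn), mul_comm]
    exact h
  · refine le_of_tendsto_of_tendsto' hlim (tendsto_hPart hT α) fun n => ?_
    have h := integral_plainH_le hm hμeprob η (hβ n)
    rw [← hμ] at h
    rw [integral_div]
    exact div_le_div_of_nonneg_right h (Nat.cast_nonneg n)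
end
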